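/- arXiv:1311.5956 — 8 statements merged into one kernel-verified Lean document; each statement's English description precedes it below -/
import Mathlib

section
/- Let a directed graph on vertex set Fin n be given by an irreflexive relation E (E j i means there is a directed edge from j to i), and suppose the graph has a spanning tree, i.e., there exists a root: a vertex r such that every vertex lies in the reflexive-transitive closure of E starting from r. Let S₁ be the set of all roots. Then the subgraph induced by S₁ is strongly connected: for any two roots r, r' ∈ S₁, the vertex r' is reachable from r by the reflexive-transitive closure of the relation E restricted to S₁ (i.e., there is a directed path from r to r' all of whose vertices are roots). -/
/-- If a directed graph on `Fin n` (given by an irreflexive relation `E`)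
has a spanning tree, then the subgraph induced by the set `S₁` of roots is strongly
connected: any root `r'` is reachable from any root `r` by a directed path all of whose
vertices are roots. -/
theorem roots_induced_subgraph_strongly_connected
    (n : ℕ) (E : Fin n → Fin n → Prop) (hirr : ∀ i, ¬ E i i)
    (hspan : ∃ r : Fin n, ∀ v : Fin n, Relation.ReflTransGen E r v)
    (r r' : Fin n)
    (hr : ∀ v : Fin n, Relation.ReflTransGen E r v)
    (hr' : ∀ v : Fin n, Relation.ReflTransGen E r' v) :
    Relation.ReflTransGen
      (fun a b => E a b ∧ (∀ v, Relation.ReflTransGen E a v) ∧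
        (∀ v, Relation.ReflTransGen E b v)) r r' := by
  have h := hr r'
  clear hr hspan
  induction h with
  | refl => exact Relation.ReflTransGen.refl
  | tail _ hbc ih =>
    have hb := fun v => Relation.ReflTransGen.head hbc (hr' v)
    exact (ih hb).tail ⟨hbc, hb, hr'⟩
end

section
/- Let L be a graph Laplacian such that G(L) has a spanning tree. If v : Fin n → ℝ satisfies ∑ j, L i j * v j = 0 for every i, then v is constant: v i = v j for all i, j. (Equivalently, the kernel of L is spanned by the all-ones vector.) -/
/-- Maximum principle: a kernel vector attains its maximum at every root. -/
theorem le_root_of_kernel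
    (n : ℕ) (L : Matrix (Fin n) (Fin n) ℝ)
    (hL1 : ∀ i j, i ≠ j → L i j ≤ 0) (hL2 : ∀ i, ∑ j, L i j = 0)
    (r : Fin n) (hr : ∀ w : Fin n,
      Relation.ReflTransGen (fun a b => a ≠ b ∧ L b a < 0) r w)
    (v : Fin n → ℝ) (hv : ∀ i, ∑ j, L i j * v j = 0) (w : Fin n) :
    v w ≤ v r := by
  have : Nonempty (Fin n) := ⟨r⟩
  obtain ⟨m, hm⟩ := Finite.exists_max v
  have key : v r = v m := by
    refine Relation.ReflTransGen.head_induction_on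
      (motive := fun a _ => v a = v m) (hr m) rfl ?_
    intro a c hac _ hc
    have hsum : ∑ j, L c j * (v j - v c) = 0 := by
      simp only [mul_sub, Finset.sum_sub_distrib, ← Finset.sum_mul, hv, hL2]
      simp
    have hnn : ∀ j ∈ Finset.univ, 0 ≤ L c j * (v j - v c) := by
      intro j _
      by_cases h : c = j
      · subst h; simp
      · exact mul_nonneg_of_nonpos_of_nonpos (hL1 c j h) (by linarith [hm j])
    have h0 := (Finset.sum_eq_zero_iff_of_nonneg hnn).1 hsum a (Finset.mem_univ a)
    rcases mul_eq_zero.1 h0 with h | h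
    · exact absurd h hac.2.ne
    · linarith
  rw [key]
  exact hm w

/-- If `L` is a graph Laplacian whose graph `G(L)` (edge from `a` to `b` iff
`a ≠ b` and `L b a < 0`) has a spanning tree, then every vector `v` in the kernel of `L`
is constant. -/
theorem kernel_constant_of_spanning_tree
    (n : ℕ) (L : Matrix (Fin n) (Fin n) ℝ)
    (hL1 : ∀ i j, i ≠ j → L i j ≤ 0) (hL2 : ∀ i, ∑ j, L i j = 0)
    (hroot : ∃ r : Fin n, ∀ w : Fin n,
      Relation.ReflTransGen (fun a b => a ≠ b ∧ L b a < 0) r w)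
    (v : Fin n → ℝ) (hv : ∀ i, ∑ j, L i j * v j = 0) :
    ∀ i j, v i = v j := by
  obtain ⟨r, hr⟩ := hroot
  have hc : ∀ w, v w = v r := by
    intro w
    have h1 := le_root_of_kernel n L hL1 hL2 r hr v hv w
    have h2 := le_root_of_kernel n L hL1 hL2 r hr (fun j => - v j)
      (fun i => by simp [hv i]) w
    linarith
  intro i j
  rw [hc i, hc j]
end

section
/- Let L be a graph Laplacian, g : ℝ → ℝ strictly increasing, and let (x, γ) be a Filippov solution of the protocol ẋ_i = -∑_j L i j g(x_j) with initial value x0. Then the function t ↦ max_i x t i is nonincreasing on [0, ∞) and the function t ↦ min_i x t i is nondecreasing on [0, ∞); in particular every Filippov solution remains in the box [min_i x0 i, max_i x0 i]^n for all t ≥ 0. -/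
open MeasureTheory Function

/-- Maximum entry of a vector on a nonempty `Fin n`. -/
noncomputable def vecMax {n : ℕ} (hn : 0 < n) (v : Fin n → ℝ) : ℝ :=
  Finset.univ.sup' ⟨⟨0, hn⟩, Finset.mem_univ _⟩ v

/-- Minimum entry of a vector on a nonempty `Fin n`. -/
noncomputable def vecMin {n : ℕ} (hn : 0 < n) (v : Fin n → ℝ) : ℝ :=
  Finset.univ.inf' ⟨⟨0, hn⟩, Finset.mem_univ _⟩ v

theorem le_vecMax {n : ℕ} (hn : 0 < n) (v : Fin n → ℝ) (i : Fin n) : v i ≤ vecMax hn v :=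
  Finset.le_sup' v (Finset.mem_univ i)

theorem exists_vecMax {n : ℕ} (hn : 0 < n) (v : Fin n → ℝ) : ∃ i, vecMax hn v = v i := by
  obtain ⟨i, -, hi⟩ := Finset.exists_mem_eq_sup' (s := Finset.univ) ⟨⟨0, hn⟩, Finset.mem_univ _⟩ v
  exact ⟨i, hi⟩

theorem vecMin_eq_neg {n : ℕ} (hn : 0 < n) (v : Fin n → ℝ) :
    vecMin hn v = - vecMax hn (fun i => - v i) := by
  apply le_antisymm
  · obtain ⟨i, hi⟩ := exists_vecMax hn (fun i => - v i)
    rw [hi, neg_neg]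
    exact Finset.inf'_le v (Finset.mem_univ i)
  · refine Finset.le_inf' _ _ fun i _ => ?_
    linarith [le_vecMax hn (fun i => - v i) i]

theorem dist_vecMax_le {n : ℕ} (hn : 0 < n) (v w : Fin n → ℝ) :
    dist (vecMax hn v) (vecMax hn w) ≤ ∑ i, dist (v i) (w i) := by
  have key : ∀ v w : Fin n → ℝ, vecMax hn v - vecMax hn w ≤ ∑ i, dist (v i) (w i) := by
    intro v w
    obtain ⟨i, hi⟩ := exists_vecMax hn v
    have h1 := le_vecMax hn w i
    have h2 : dist (v i) (w i) ≤ ∑ i, dist (v i) (w i) :=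
      Finset.single_le_sum (f := fun i => dist (v i) (w i)) (fun _ _ => dist_nonneg)
        (Finset.mem_univ i)
    have h3 : v i - w i ≤ dist (v i) (w i) := by rw [Real.dist_eq]; exact le_abs_self _
    linarith
  rw [Real.dist_eq, abs_sub_le_iff]
  refine ⟨key v w, ?_⟩
  have := key w v
  simpa only [dist_comm] using this

theorem vecMax_ac {n : ℕ} (hn : 0 < n) (y : ℝ → Fin n → ℝ) (a b : ℝ)
    (h : ∀ i, AbsolutelyContinuousOnInterval (fun t => y t i) a b) :
    AbsolutelyContinuousOnInterval (fun t => vecMax hn (y t)) a b := by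
  unfold AbsolutelyContinuousOnInterval at *
  have hs := tendsto_finsetSum (Finset.univ : Finset (Fin n)) (fun i _ => h i)
  rw [Finset.sum_const_zero] at hs
  refine squeeze_zero (fun E => Finset.sum_nonneg fun _ _ => dist_nonneg) (fun E => ?_) hs
  rw [Finset.sum_comm]
  exact Finset.sum_le_sum fun k _ => dist_vecMax_le hn _ _

theorem laplacian_sign {n : ℕ} (L : Matrix (Fin n) (Fin n) ℝ)
    (hL1 : ∀ i j, i ≠ j → L i j ≤ 0) (hL2 : ∀ i, ∑ j, L i j = 0) (c : Fin n → ℝ) (i : Fin n)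
    (hc : ∀ j, c j ≤ c i) : 0 ≤ ∑ j, L i j * c j := by
  have h : ∑ j, L i j * c j = ∑ j, L i j * (c j - c i) := by
    simp only [mul_sub, Finset.sum_sub_distrib, ← Finset.sum_mul, hL2, zero_mul, sub_zero]
  rw [h]
  refine Finset.sum_nonneg fun j _ => ?_
  by_cases hij : i = j
  · subst hij; simp
  · exact mul_nonneg_of_nonpos_of_nonpos (hL1 i j hij) (by linarith [hc j])

theorem vecMax_antitone_aux
    (n : ℕ) (hn : 0 < n) (L : Matrix (Fin n) (Fin n) ℝ)
    (hL1 : ∀ i j, i ≠ j → L i j ≤ 0) (hL2 : ∀ i, ∑ j, L i j = 0)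
    (x0 : Fin n → ℝ) (y γ : ℝ → Fin n → ℝ)
    (hγint : ∀ j, LocallyIntegrable (fun t => γ t j) volume)
    (hγK : ∀ᵐ t ∂volume, 0 ≤ t → ∀ i j, y t i < y t j → γ t i ≤ γ t j)
    (hsol : ∀ t i, y t i = x0 i - ∫ s in (0:ℝ)..t, ∑ j, L i j * γ s j)
    (a b : ℝ) (ha : 0 ≤ a) (hab : a ≤ b) : vecMax hn (y b) ≤ vecMax hn (y a) := by
  have hF : ∀ i, LocallyIntegrable (fun s => ∑ j, L i j * γ s j) volume := by
    intro i
    refine locallyIntegrable_finsetSum _ fun j _ => ?_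
    exact (hγint j).smul (L i j)
  have hyac : ∀ i, AbsolutelyContinuousOnInterval (fun t => y t i) a b := by
    intro i
    have h1 : AbsolutelyContinuousOnInterval
        (fun t => ∫ s in (0:ℝ)..t, ∑ j, L i j * γ s j) 0 b :=
      IntervalIntegrable.absolutelyContinuousOnInterval_intervalIntegral
        (intervalIntegrable_iff.mpr (((hF i).integrableOn_isCompact isCompact_uIcc).mono_set
          Set.uIoc_subset_uIcc)) (by simp)
    have h2 := h1.mono (c := a) (d := b) (by
      rw [Set.uIcc_of_le hab, Set.uIcc_of_le (ha.trans hab)]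
      exact Set.Icc_subset_Icc_left ha)
    have h3 : AbsolutelyContinuousOnInterval (fun _ : ℝ => x0 i) a b := by
      simp [absolutelyContinuousOnInterval_iff]
      intro ε hε
      exact ⟨1, one_pos, fun _ _ _ _ => hε⟩
    have h4 := h3.sub h2
    have e : (fun t => y t i) = (fun _ : ℝ => x0 i) -
        fun t => ∫ s in (0:ℝ)..t, ∑ j, L i j * γ s j := by
      funext t
      exact hsol t i
    rw [e]
    exact h4
  have hM := vecMax_ac hn y a b hyac
  have hder : ∀ᵐ t ∂volume, ∀ i, HasDerivAt (fun t => y t i) (-(∑ j, L i j * γ t j)) t := by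
    rw [ae_all_iff]
    intro i
    filter_upwards [LocallyIntegrable.ae_hasDerivAt_integral (hF i)] with t ht
    have h := (ht 0).const_sub (x0 i)
    have e : (fun t => y t i) = fun t => x0 i - ∫ s in (0:ℝ)..t, ∑ j, L i j * γ s j := by
      funext t; exact hsol t i
    rw [e]
    exact h
  have hneg : ∀ᵐ t ∂volume, t ∈ Set.Ioc a b → 0 ≤ - deriv (fun t => vecMax hn (y t)) t := by
    filter_upwards [hM.ae_differentiableAt, hder, hγK] with t h1 h2 h3 ht
    have hd := (h1 (by rw [Set.uIcc_of_le hab]; exact ⟨ht.1.le, ht.2⟩)).hasDerivAt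
    have h3 := h3 (ha.trans ht.1.le)
    obtain ⟨i0, hi0⟩ := exists_vecMax hn (y t)
    obtain ⟨i, hi, himax⟩ := Finset.exists_max_image
      (Finset.univ.filter fun i => y t i = vecMax hn (y t)) (γ t) ⟨i0, by simp [hi0]⟩
    simp only [Finset.mem_filter, Finset.mem_univ, true_and] at hi himax
    have hc : ∀ j, γ t j ≤ γ t i := by
      intro j
      rcases (le_vecMax hn (y t) j).eq_or_lt with h | h
      · exact himax j h
      · exact h3 j i (hi ▸ h)
    have hs := laplacian_sign L hL1 hL2 (γ t) i hc
    have hmin : IsLocalMin (fun s => vecMax hn (y s) - y s i) t := by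
      refine Filter.Eventually.of_forall fun s => ?_
      have := le_vecMax hn (y s) i
      simp only [hi]
      linarith
    have := hmin.hasDerivAt_eq_zero (hd.sub (h2 i))
    linarith
  have hint := hM.integral_deriv_eq_sub
  have hnn : 0 ≤ ∫ t in a..b, - deriv (fun t => vecMax hn (y t)) t := by
    rw [intervalIntegral.integral_of_le hab]
    exact setIntegral_nonneg_of_ae_restrict ((ae_restrict_iff' measurableSet_Ioc).2 hneg)
  rw [intervalIntegral.integral_neg, hint] at hnn
  linarith

theorem vecMax_antitone
    (n : ℕ) (hn : 0 < n) (L : Matrix (Fin n) (Fin n) ℝ)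
    (hL1 : ∀ i j, i ≠ j → L i j ≤ 0) (hL2 : ∀ i, ∑ j, L i j = 0)
    (x0 : Fin n → ℝ) (x γ : ℝ → Fin n → ℝ)
    (hγint : ∀ j, LocallyIntegrable (fun t => γ t j) volume)
    (hγK : ∀ᵐ t ∂volume, 0 ≤ t → ∀ i j, x t i < x t j → γ t i ≤ γ t j)
    (hsol : ∀ t, 0 ≤ t → ∀ i, x t i = x0 i - ∫ s in (0:ℝ)..t, ∑ j, L i j * γ s j)
    (a b : ℝ) (ha : 0 ≤ a) (hab : a ≤ b) : vecMax hn (x b) ≤ vecMax hn (x a) := by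
  have e : ∀ t, 0 ≤ t → x t = fun i => x0 i - ∫ s in (0:ℝ)..t, ∑ j, L i j * γ s j :=
    fun t ht => funext fun i => hsol t ht i
  rw [e a ha, e b (ha.trans hab)]
  refine vecMax_antitone_aux n hn L hL1 hL2 x0
    (fun t i => x0 i - ∫ s in (0:ℝ)..t, ∑ j, L i j * γ s j) γ hγint ?_ (fun _ _ => rfl) a b ha hab
  filter_upwards [hγK] with t h ht i j hij
  refine h ht i j ?_
  rw [e t ht]
  exact hij

/-- For any Filippov solution `(x, γ)` of `ẋ_i = -∑_j L i j g(x_j)` with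
initial value `x0`, the map `t ↦ max_i x t i` is nonincreasing on `[0, ∞)` and
`t ↦ min_i x t i` is nondecreasing on `[0, ∞)`; in particular the solution remains in
the box `[min_i x0 i, max_i x0 i]^n` for all `t ≥ 0`. -/
theorem filippov_solution_shrinking
    (n : ℕ) (hn : 0 < n) (L : Matrix (Fin n) (Fin n) ℝ)
    (hL1 : ∀ i j, i ≠ j → L i j ≤ 0) (hL2 : ∀ i, ∑ j, L i j = 0)
    (g : ℝ → ℝ) (hg : StrictMono g)
    (x0 : Fin n → ℝ) (x γ : ℝ → Fin n → ℝ)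
    (hxcont : Continuous x) (hγmeas : Measurable γ)
    (hγint : LocallyIntegrable γ volume)
    (hγK : ∀ᵐ t ∂volume, 0 ≤ t →
      ∀ j, γ t j ∈ Set.Icc (leftLim g (x t j)) (rightLim g (x t j)))
    (hsol : ∀ t, 0 ≤ t → ∀ i,
      x t i = x0 i - ∫ s in (0:ℝ)..t, ∑ j, L i j * γ s j) :
    AntitoneOn (fun t => vecMax hn (x t)) (Set.Ici (0:ℝ)) ∧
    MonotoneOn (fun t => vecMin hn (x t)) (Set.Ici (0:ℝ)) ∧
    ∀ t, 0 ≤ t → ∀ i, x t i ∈ Set.Icc (vecMin hn x0) (vecMax hn x0) := by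
  have hγj : ∀ j, LocallyIntegrable (fun t => γ t j) volume := by
    intro j t
    obtain ⟨u, hu, hi⟩ := hγint t
    exact ⟨u, hu, Integrable.eval hi j⟩
  have hmono : ∀ᵐ t ∂volume, 0 ≤ t → ∀ i j, x t i < x t j → γ t i ≤ γ t j := by
    filter_upwards [hγK] with t h ht i j hij
    exact (h ht i).2.trans ((hg.monotone.rightLim_le_leftLim hij).trans (h ht j).1)
  have hmax := vecMax_antitone n hn L hL1 hL2 x0 x γ hγj hmono hsol
  have hmin := vecMax_antitone n hn L hL1 hL2 (fun i => - x0 i) (fun t i => - x t i)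
    (fun t i => - γ t i) (fun j => (hγj j).neg)
    (by
      filter_upwards [hmono] with t h ht i j hij
      exact neg_le_neg (h ht j i (neg_lt_neg_iff.1 hij)))
    (by
      intro t ht i
      simp only [mul_neg, Finset.sum_neg_distrib, intervalIntegral.integral_neg]
      rw [hsol t ht i]
      ring)
  have hx0 : x 0 = x0 := by
    funext i
    simpa using hsol 0 le_rfl i
  refine ⟨fun a ha b _ hab => hmax a b ha hab, fun a ha b _ hab => ?_, fun t ht i => ⟨?_, ?_⟩⟩
  · simp only [vecMin_eq_neg]
    exact neg_le_neg (hmin a b ha hab)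
  · rw [vecMin_eq_neg, ← hx0]
    have h1 := hmin 0 t le_rfl ht
    have h2 := le_vecMax hn (fun i => - x t i) i
    linarith
  · rw [← hx0]
    exact (le_vecMax hn (x t) i).trans (hmax 0 t le_rfl ht)
end

section
/- Let L be a graph Laplacian, g : ℝ → ℝ strictly increasing, and let (x, γ) be a Filippov solution of the protocol ẋ_i = -∑_j L i j g(x_j) with initial value x0. If ξ : Fin n → ℝ is a left null vector of L, i.e., ∑ i, ξ i * L i j = 0 for every j, then the quantity ∑ i, ξ i * x t i is conserved: ∑ i, ξ i * x t i = ∑ i, ξ i * x0 i for all t ≥ 0. -/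
open MeasureTheory Function

/-- For any Filippov solution `(x, γ)` of `ẋ_i = -∑_j L i j g(x_j)` with
initial value `x0`, if `ξ` is a left null vector of `L`, then `∑ i, ξ i * x t i` is
conserved. -/
theorem filippov_solution_conserved_quantity
    (n : ℕ) (L : Matrix (Fin n) (Fin n) ℝ)
    (hL1 : ∀ i j, i ≠ j → L i j ≤ 0) (hL2 : ∀ i, ∑ j, L i j = 0)
    (g : ℝ → ℝ) (hg : StrictMono g)
    (x0 : Fin n → ℝ) (x γ : ℝ → Fin n → ℝ)
    (hxcont : Continuous x) (hγmeas : Measurable γ)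
    (hγint : LocallyIntegrable γ volume)
    (hγK : ∀ᵐ t ∂volume, 0 ≤ t →
      ∀ j, γ t j ∈ Set.Icc (leftLim g (x t j)) (rightLim g (x t j)))
    (hsol : ∀ t, 0 ≤ t → ∀ i,
      x t i = x0 i - ∫ s in (0:ℝ)..t, ∑ j, L i j * γ s j)
    (ξ : Fin n → ℝ) (hξ : ∀ j, ∑ i, ξ i * L i j = 0) :
    ∀ t, 0 ≤ t → ∑ i, ξ i * x t i = ∑ i, ξ i * x0 i := by
  intro t ht
  have hγ : ∀ j, IntervalIntegrable (fun s => γ s j) volume 0 t := by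
    intro j
    have h1 : IntegrableOn γ (Set.Icc 0 t) volume := hγint.integrableOn_isCompact isCompact_Icc
    rw [intervalIntegrable_iff_integrableOn_Icc_of_le ht]
    exact Integrable.eval h1 j
  have hI : ∀ i, ∫ s in (0:ℝ)..t, ∑ j, L i j * γ s j
      = ∑ j, L i j * ∫ s in (0:ℝ)..t, γ s j := by
    intro i
    rw [intervalIntegral.integral_finsetSum (fun j _ => (hγ j).const_mul _)]
    simp only [intervalIntegral.integral_const_mul]
  have h0 : ∑ i, ξ i * ∑ j, L i j * ∫ s in (0:ℝ)..t, γ s j = 0 := by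
    simp only [Finset.mul_sum, ← mul_assoc]
    rw [Finset.sum_comm]
    simp only [← Finset.sum_mul, hξ, zero_mul, Finset.sum_const_zero]
  have h2 : ∀ i, ξ i * x t i = ξ i * x0 i - ξ i * ∑ j, L i j * ∫ s in (0:ℝ)..t, γ s j := by
    intro i
    rw [hsol t ht i, hI i, mul_sub]
  rw [Finset.sum_congr rfl (fun i _ => h2 i), Finset.sum_sub_distrib, h0, sub_zero]
end

section
/- (Sufficiency part of Theorem 1.) Let L be a graph Laplacian such that G(L) has a spanning tree, and let g : ℝ → ℝ be strictly increasing with only finitely many discontinuity points in every bounded interval. Let ξ : Fin n → ℝ satisfy ∑ i, ξ i * L i j = 0 for every j and ∑ i, ξ i = 1. Then every Filippov solution (x, γ) of the protocol ẋ_i = -∑_j L i j g(x_j) with initial value x0 achieves consensus: for every i, x t i converges as t → ∞ to the value c = ∑ i, ξ i * x0 i. -/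
open MeasureTheory Function Filter

theorem locint_ii {f : ℝ → ℝ} (hf : LocallyIntegrable f volume) (a b : ℝ) :
    IntervalIntegrable f volume a b :=
  (hf.integrableOn_isCompact isCompact_uIcc).intervalIntegrable

theorem ac_posPart {F : ℝ → ℝ} {a b : ℝ} (h : AbsolutelyContinuousOnInterval F a b) :
    AbsolutelyContinuousOnInterval (fun t => max (F t) 0) a b := by
  rw [absolutelyContinuousOnInterval_iff] at h ⊢
  intro ε hε
  obtain ⟨δ, hδ, H⟩ := h ε hε
  refine ⟨δ, hδ, fun E hE hE2 => lt_of_le_of_lt (Finset.sum_le_sum fun i _ => ?_) (H E hE hE2)⟩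
  rw [Real.dist_eq, Real.dist_eq]
  exact abs_max_sub_max_le_abs _ _ _

/-- Fundamental theorem of calculus for the positive part of an integral function. -/
theorem posPart_ftc {f F : ℝ → ℝ} {C : ℝ} (hf : LocallyIntegrable f volume)
    (hF : ∀ t, F t = C + ∫ s in (0:ℝ)..t, f s) {S T : ℝ} (hS : 0 ≤ S) (hT : S ≤ T) :
    max (F T) 0 - max (F S) 0 = ∫ s in S..T, (if 0 < F s then f s else 0) := by
  have hFi : F = fun t => C + ∫ s in (0:ℝ)..t, f s := funext hF
  have hac : AbsolutelyContinuousOnInterval F 0 T := by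
    have h1 : AbsolutelyContinuousOnInterval (fun _ : ℝ => C) 0 T :=
      (LipschitzWith.const C).lipschitzOnWith.absolutelyContinuousOnInterval
    have h2 := (locint_ii hf 0 T).absolutelyContinuousOnInterval_intervalIntegral (c := 0) (by simp)
    rw [hFi]
    exact h1.add h2
  have hac2 : AbsolutelyContinuousOnInterval F S T := by
    apply hac.mono
    rw [Set.uIcc_of_le hT, Set.uIcc_of_le (hS.trans hT)]
    exact Set.Icc_subset_Icc_left hS
  have hac3 := ac_posPart hac2
  rw [← hac3.integral_deriv_eq_sub]
  apply intervalIntegral.integral_congr_ae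
  filter_upwards [hac3.ae_differentiableAt, LocallyIntegrable.ae_hasDerivAt_integral hf] with t h1 h2 h3
  have h1 := h1 (Set.uIoc_subset_uIcc h3)
  have h2' : HasDerivAt F (f t) t := by
    rw [hFi]
    exact (h2 0).const_add C
  split_ifs with hpos
  · have : (fun t => max (F t) 0) =ᶠ[nhds t] F := by
      filter_upwards [h2'.continuousAt.eventually (lt_mem_nhds hpos)] with s hs
      exact max_eq_left (le_of_lt hs)
    rw [this.deriv_eq, h2'.deriv]
  · have : IsLocalMin (fun t => max (F t) 0) t := by
      refine Eventually.of_forall fun s => ?_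
      simp only [max_eq_right (not_lt.mp hpos)]
      exact le_max_right _ _
    exact this.deriv_eq_zero

/-- A reformulated solution concept, symmetric under `x ↦ -x`. -/
structure Sol {n : ℕ} (L : Fin n → Fin n → ℝ) (g : ℝ → ℝ) (x γ : ℝ → Fin n → ℝ) : Prop where
  cont : ∀ i, Continuous fun t => x t i
  int : ∀ i, LocallyIntegrable (fun t => γ t i) volume
  low : ∀ᵐ t ∂volume, 0 ≤ t → ∀ j z, z < x t j → g z ≤ γ t j
  up : ∀ᵐ t ∂volume, 0 ≤ t → ∀ j z, x t j < z → γ t j ≤ g z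
  sol : ∀ t, 0 ≤ t → ∀ i, x t i = x 0 i - ∫ s in (0:ℝ)..t, ∑ j, L i j * γ s j

theorem Sol.neg {n : ℕ} {L : Fin n → Fin n → ℝ} {g : ℝ → ℝ} {x γ : ℝ → Fin n → ℝ}
    (h : Sol L g x γ) : Sol L (fun z => - g (-z)) (fun t i => - x t i) (fun t i => - γ t i) where
  cont i := (h.cont i).neg
  int i := (h.int i).neg
  low := by
    filter_upwards [h.up] with t ht h0 j z hz
    exact neg_le_neg (ht h0 j (-z) (by linarith))
  up := by
    filter_upwards [h.low] with t ht h0 j z hz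
    exact neg_le_neg (ht h0 j (-z) (by linarith))
  sol t ht i := by
    have := h.sol t ht i
    simp only [mul_neg, Finset.sum_neg_distrib, intervalIntegral.integral_neg]
    linarith

theorem strictMono_neg {g : ℝ → ℝ} (hg : StrictMono g) : StrictMono (fun z => - g (-z)) :=
  fun _ _ hab => neg_lt_neg (hg (neg_lt_neg hab))

/-- right limit -/
noncomputable def rl (g : ℝ → ℝ) (θ : ℝ) : ℝ := sInf (g '' Set.Ioi θ)

theorem rl_le {g : ℝ → ℝ} (hg : StrictMono g) {θ z : ℝ} (h : θ < z) : rl g θ ≤ g z := by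
  refine csInf_le ⟨g θ, ?_⟩ ⟨z, h, rfl⟩
  rintro _ ⟨y, hy, rfl⟩
  exact (hg hy).le

theorem le_rl {g : ℝ → ℝ} {θ y : ℝ} (h : ∀ z, θ < z → y ≤ g z) : y ≤ rl g θ := by
  refine le_csInf ⟨_, θ + 1, by simp, rfl⟩ ?_
  rintro _ ⟨z, hz, rfl⟩
  exact h z hz

/-- excess of `γ j` over level -/
noncomputable def uu {n : ℕ} (g : ℝ → ℝ) (γ : ℝ → Fin n → ℝ) (θ : ℝ) (j : Fin n) (t : ℝ) : ℝ :=
  max (γ t j - rl g θ) 0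

theorem uu_nonneg {n : ℕ} (g : ℝ → ℝ) (γ : ℝ → Fin n → ℝ) (θ : ℝ) (j : Fin n) (t : ℝ) :
    0 ≤ uu g γ θ j t := le_max_right _ _

section
variable {n : ℕ} {L : Fin n → Fin n → ℝ} {g : ℝ → ℝ} {x γ : ℝ → Fin n → ℝ}

theorem Sol.locint_uu (h : Sol L g x γ) (θ : ℝ) (j : Fin n) :
    LocallyIntegrable (uu g γ θ j) volume := by
  have h1 : LocallyIntegrable (fun t => γ t j - rl g θ) volume :=
    (h.int j).sub (locallyIntegrable_const _)
  refine h1.mono (h1.aestronglyMeasurable.sup aestronglyMeasurable_const) ?_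
  refine Eventually.of_forall fun t => ?_
  simp only [uu, Real.norm_eq_abs]
  have := abs_max_sub_max_le_abs (γ t j - rl g θ) 0 0
  simpa using this

theorem locint_ite {f : ℝ → ℝ} (hf : LocallyIntegrable f volume) {s : ℝ → Prop}
    [DecidablePred s] (hs : MeasurableSet {t | s t}) :
    LocallyIntegrable (fun t => if s t then f t else 0) volume := by
  refine hf.mono (AEStronglyMeasurable.piecewise (s := {t | s t}) hs hf.aestronglyMeasurable.restrict
    aestronglyMeasurable_const) ?_
  refine Eventually.of_forall fun t => ?_
  split_ifs <;> simp

theorem Sol.locint_f (h : Sol L g x γ) (i : Fin n) :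
    LocallyIntegrable (fun s => ∑ j, L i j * γ s j) volume := by
  apply locallyIntegrable_finsetSum
  intro j _
  exact (h.int j).smul (L i j)

/-- time integral of the excess -/
noncomputable def UU (g : ℝ → ℝ) (γ : ℝ → Fin n → ℝ) (θ S T : ℝ) (j : Fin n) : ℝ :=
  ∫ s in S..T, uu g γ θ j s

/-- time integral of the excess while `x i ≤ θ` -/
noncomputable def WW (g : ℝ → ℝ) (x γ : ℝ → Fin n → ℝ) (θ S T : ℝ) (i j : Fin n) : ℝ :=
  ∫ s in S..T, (if x s i ≤ θ then uu g γ θ j s else 0)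

theorem Sol.locint_w (h : Sol L g x γ) (θ : ℝ) (i j : Fin n) :
    LocallyIntegrable (fun s => if x s i ≤ θ then uu g γ θ j s else 0) volume :=
  locint_ite (h.locint_uu θ j) (isClosed_le (h.cont i) continuous_const).measurableSet

theorem Sol.uu_zero (h : Sol L g x γ) (θ : ℝ) :
    ∀ᵐ t ∂volume, 0 ≤ t → ∀ j, x t j ≤ θ → uu g γ θ j t = 0 := by
  filter_upwards [h.up] with t ht h0 j hj
  apply max_eq_right
  have := le_rl (θ := θ) (g := g) (y := γ t j) fun z hz => ht h0 j z (lt_of_le_of_lt hj hz)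
  linarith

theorem Sol.uu_active (h : Sol L g x γ) (hg : StrictMono g) (θ : ℝ) :
    ∀ᵐ t ∂volume, 0 ≤ t → ∀ j, θ < x t j → uu g γ θ j t = γ t j - rl g θ := by
  filter_upwards [h.low] with t ht h0 j hj
  apply max_eq_left
  obtain ⟨z, h1, h2⟩ := exists_between hj
  have := rl_le hg h1
  have := ht h0 j z h2
  linarith

theorem Sol.core (h : Sol L g x γ) (hg : StrictMono g)
    (hL1 : ∀ i j, i ≠ j → L i j ≤ 0) (hL2 : ∀ i, ∑ j, L i j = 0) (θ : ℝ) {S T : ℝ}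
    (hS : 0 ≤ S) (hT : S ≤ T) (i j : Fin n) (c : ℝ)
    (hc : c = 0 ∨ (i ≠ j ∧ c = L i j)) :
    ∑ k, L i k * UU g γ θ S T k - c * WW g x γ θ S T i j
      ≤ max (x S i - θ) 0 - max (x T i - θ) 0 := by
  have hf := h.locint_f i
  have key := posPart_ftc (f := fun s => - ∑ j, L i j * γ s j)
    (F := fun t => (x 0 i - θ) + ∫ s in (0:ℝ)..t, - ∑ j, L i j * γ s j) hf.neg (fun t => rfl) hS hT
  have hx : ∀ t, 0 ≤ t → (x 0 i - θ) + ∫ s in (0:ℝ)..t, - ∑ j, L i j * γ s j = x t i - θ := by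
    intro t ht
    rw [h.sol t ht i, intervalIntegral.integral_neg]; ring
  simp only [hx S hS, hx T (hS.trans hT)] at key
  have key2 : max (x T i - θ) 0 - max (x S i - θ) 0
      = ∫ s in S..T, (if 0 < x s i - θ then - ∑ j, L i j * γ s j else 0) := by
    rw [key]
    apply intervalIntegral.integral_congr
    intro s hs
    rw [Set.uIcc_of_le hT] at hs
    simp only [hx s (hS.trans hs.1)]
  have e1 : ∑ k, L i k * UU g γ θ S T k = ∫ s in S..T, ∑ k, L i k * uu g γ θ k s := by
    rw [intervalIntegral.integral_finsetSum]
    · simp [UU]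
    · intro k _
      exact locint_ii ((h.locint_uu θ k).smul (L i k)) _ _
  have e2 : c * WW g x γ θ S T i j
      = ∫ s in S..T, c * (if x s i ≤ θ then uu g γ θ j s else 0) := by
    rw [WW, intervalIntegral.integral_const_mul]
  have i1 : LocallyIntegrable (fun s => ∑ k, L i k * uu g γ θ k s) volume := by
    apply locallyIntegrable_finsetSum
    intro k _
    exact (h.locint_uu θ k).smul (L i k)
  have i2 : LocallyIntegrable
      (fun s => c * (if x s i ≤ θ then uu g γ θ j s else 0)) volume :=
    (h.locint_w θ i j).smul c
  have i3 : LocallyIntegrable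
      (fun s => if 0 < x s i - θ then - ∑ j, L i j * γ s j else 0) volume :=
    locint_ite hf.neg (isOpen_lt continuous_const ((h.cont i).sub continuous_const)).measurableSet
  rw [← neg_sub (max (x T i - θ) 0), key2, ← intervalIntegral.integral_neg, e1, e2,
    ← intervalIntegral.integral_sub (locint_ii i1 _ _) (locint_ii i2 _ _)]
  apply intervalIntegral.integral_mono_ae_restrict hT
    (locint_ii (i1.sub i2) _ _) (locint_ii i3.neg _ _)
  filter_upwards [ae_restrict_of_ae (h.uu_zero θ), ae_restrict_of_ae (h.uu_active hg θ),
    ae_restrict_mem measurableSet_Icc] with t h0 ha ht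
  have ht0 : 0 ≤ t := hS.trans ht.1
  have h0 := h0 ht0
  have ha := ha ht0
  show (∑ k, L i k * uu g γ θ k t) - c * (if x t i ≤ θ then uu g γ θ j t else 0)
    ≤ - (if 0 < x t i - θ then - ∑ j, L i j * γ t j else 0)
  by_cases hxc : x t i ≤ θ
  · have hc' : ¬ (0 < x t i - θ) := by linarith
    simp only [hxc, hc', if_true, if_false, neg_zero]
    have hneg : ∀ k, L i k * uu g γ θ k t ≤ 0 := by
      intro k
      by_cases hk : i = k
      · subst hk; simp [h0 i hxc]
      · exact mul_nonpos_of_nonpos_of_nonneg (hL1 i k hk) (uu_nonneg _ _ _ _ _)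
    rcases hc with rfl | ⟨hij, rfl⟩
    · have : ∑ k, L i k * uu g γ θ k t ≤ 0 := Finset.sum_nonpos fun k _ => hneg k
      linarith
    · rw [← Finset.add_sum_erase _ _ (Finset.mem_univ j)]
      have : ∑ k ∈ Finset.univ.erase j, L i k * uu g γ θ k t ≤ 0 :=
        Finset.sum_nonpos fun k _ => hneg k
      linarith
  · have hc' : 0 < x t i - θ := by linarith
    simp only [hxc, hc', if_true, if_false, neg_neg, mul_zero, sub_zero]
    have : ∑ k, L i k * γ t k = ∑ k, L i k * (γ t k - rl g θ) := by
      simp only [mul_sub, Finset.sum_sub_distrib, ← Finset.sum_mul, hL2 i]; ring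
    rw [this]
    apply Finset.sum_le_sum
    intro k _
    by_cases hk : i = k
    · subst hk; rw [ha i (by linarith)]
    · exact mul_le_mul_of_nonpos_left (le_max_left _ _) (hL1 i k hk)
end
section
variable {n : ℕ} {L : Fin n → Fin n → ℝ}

theorem path_bound (hL1 : ∀ i j, i ≠ j → L i j ≤ 0) (hL2 : ∀ i, ∑ j, L i j = 0) {a w : Fin n}
    (h : Relation.ReflTransGen (fun a b => a ≠ b ∧ L b a < 0) a w) :
    ∃ K : ℝ, 0 ≤ K ∧ ∀ C : ℝ, 0 ≤ C → ∀ Y : Fin n → ℝ, (∀ i, ∑ k, L i k * Y k ≤ C) →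
      (∀ j, Y j ≤ Y w) → Y w ≤ Y a + K * C := by
  induction h using Relation.ReflTransGen.head_induction_on with
  | refl => exact ⟨0, le_rfl, fun C _ Y _ _ => by simp⟩
  | @head a b hab _ ih =>
    obtain ⟨K, hK, ih⟩ := ih
    obtain ⟨hne, hlt⟩ := hab
    set A := ∑ k, |L b k| with hA
    have hA0 : 0 ≤ A := Finset.sum_nonneg fun k _ => abs_nonneg _
    refine ⟨K + (1 + A * K) / (- L b a), ?_, ?_⟩
    · have : 0 < - L b a := by linarith
      positivity
    intro C hC Y hY hmax
    have h1 := ih C hC Y hY hmax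
    have h2 := hY b
    have h3 : ∑ k, L b k * Y k = ∑ k, L b k * (Y k - Y b) := by
      simp only [mul_sub, Finset.sum_sub_distrib, ← Finset.sum_mul, hL2 b]; ring
    rw [h3, ← Finset.add_sum_erase _ _ (Finset.mem_univ a)] at h2
    have h4 : -(A * (K * C)) ≤ ∑ k ∈ Finset.univ.erase a, L b k * (Y k - Y b) := by
      have : A * (K * C) ≥ ∑ k ∈ Finset.univ.erase a, |L b k| * (K * C) := by
        rw [hA, Finset.sum_mul]
        exact Finset.sum_le_sum_of_subset_of_nonneg (Finset.erase_subset _ _)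
          fun k _ _ => by positivity
      have h5 : ∑ k ∈ Finset.univ.erase a, -(|L b k| * (K * C)) ≤
          ∑ k ∈ Finset.univ.erase a, L b k * (Y k - Y b) := by
        apply Finset.sum_le_sum
        intro k _
        by_cases hk : b = k
        · subst hk
          have : 0 ≤ |L b b| * (K * C) := by positivity
          simp only [sub_self, mul_zero]; linarith
        · have h6 := hL1 b k hk
          rw [abs_of_nonpos h6]
          have h7 : Y k - Y b ≤ K * C := by linarith [hmax k]
          nlinarith
      rw [Finset.sum_neg_distrib] at h5
      linarith
    have h8 : (Y b - Y a) * (- L b a) ≤ (1 + A * K) * C := by nlinarith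
    have h9 : Y b - Y a ≤ (1 + A * K) * C / (- L b a) := by
      rw [le_div_iff₀ (by linarith)]; exact h8
    have : (K + (1 + A * K) / (- L b a)) * C = K * C + (1 + A * K) * C / (- L b a) := by ring
    linarith

theorem graph_bound (hL1 : ∀ i j, i ≠ j → L i j ≤ 0) (hL2 : ∀ i, ∑ j, L i j = 0) {r : Fin n}
    (h : ∀ w, Relation.ReflTransGen (fun a b => a ≠ b ∧ L b a < 0) r w) :
    ∃ K : ℝ, 0 ≤ K ∧ ∀ C : ℝ, 0 ≤ C → ∀ Y : Fin n → ℝ, (∀ i, ∑ k, L i k * Y k ≤ C) →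
      ∀ j, Y j ≤ Y r + K * C := by
  choose K hK H using fun w => path_bound hL1 hL2 (h w)
  refine ⟨∑ w, K w, Finset.sum_nonneg fun w _ => hK w, fun C hC Y hY j => ?_⟩
  obtain ⟨w, -, hw⟩ := Finset.exists_max_image Finset.univ Y ⟨r, Finset.mem_univ r⟩
  have h1 := H w C hC Y hY fun j => hw j (Finset.mem_univ j)
  have h2 : K w ≤ ∑ w, K w := Finset.single_le_sum (fun w _ => hK w) (Finset.mem_univ w)
  have h3 := hw j (Finset.mem_univ j)
  nlinarith

theorem abs_null (hL1 : ∀ i j, i ≠ j → L i j ≤ 0) (hL2 : ∀ i, ∑ j, L i j = 0)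
    {ξ : Fin n → ℝ} (hξ : ∀ j, ∑ i, ξ i * L i j = 0) : ∀ j, ∑ i, |ξ i| * L i j = 0 := by
  have hd : ∀ j, 0 ≤ L j j := by
    intro j
    have := hL2 j
    rw [← Finset.add_sum_erase _ _ (Finset.mem_univ j)] at this
    have h2 : ∑ k ∈ Finset.univ.erase j, L j k ≤ 0 :=
      Finset.sum_nonpos fun k hk => hL1 j k (Finset.ne_of_mem_erase hk).symm
    linarith
  have h1 : ∀ j, ∑ i, |ξ i| * L i j ≤ 0 := by
    intro j
    have h := hξ j
    rw [← Finset.add_sum_erase _ _ (Finset.mem_univ j)] at h ⊢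
    have h2 : |ξ j| * L j j = |∑ i ∈ Finset.univ.erase j, ξ i * L i j| := by
      rw [show |ξ j| * L j j = |ξ j * L j j| by rw [abs_mul, abs_of_nonneg (hd j)],
        eq_neg_of_add_eq_zero_left h, abs_neg]
    have h3 := Finset.abs_sum_le_sum_abs (fun i => ξ i * L i j) (Finset.univ.erase j)
    have h4 : ∑ i ∈ Finset.univ.erase j, |ξ i * L i j|
        = - ∑ i ∈ Finset.univ.erase j, |ξ i| * L i j := by
      rw [← Finset.sum_neg_distrib]
      apply Finset.sum_congr rfl
      intro i hi
      rw [abs_mul, abs_of_nonpos (hL1 i j (Finset.ne_of_mem_erase hi))]; ring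
    linarith
  have h2 : ∑ j, ∑ i, |ξ i| * L i j = 0 := by
    rw [Finset.sum_comm]
    simp [← Finset.mul_sum, hL2]
  intro j
  exact (Finset.sum_eq_zero_iff_of_nonpos (fun j _ => h1 j)).mp h2 j (Finset.mem_univ j)

theorem pos_pred (hL1 : ∀ i j, i ≠ j → L i j ≤ 0) {η : Fin n → ℝ} (h0 : ∀ i, 0 ≤ η i)
    (hη : ∀ j, ∑ i, η i * L i j = 0) {i j : Fin n} (hi : 0 < η i) (hij : i ≠ j)
    (hL : L i j < 0) : 0 < η j := by
  refine lt_of_le_of_ne (h0 j) fun h => ?_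
  have h1 : ∀ k ∈ Finset.univ, η k * L k j ≤ 0 := by
    intro k _
    by_cases hk : k = j
    · subst hk; simp [← h]
    · exact mul_nonpos_of_nonneg_of_nonpos (h0 k) (hL1 k j hk)
  have := (Finset.sum_eq_zero_iff_of_nonpos h1).mp (hη j) i (Finset.mem_univ i)
  nlinarith

theorem null_pair {η : Fin n → ℝ}
    (hη : ∀ j, ∑ i, η i * L i j = 0) (Y : Fin n → ℝ) : ∑ i, η i * ∑ k, L i k * Y k = 0 := by
  simp only [Finset.mul_sum]
  rw [Finset.sum_comm]
  apply Finset.sum_eq_zero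
  intro k _
  have := hη k
  calc ∑ i, η i * (L i k * Y k) = (∑ i, η i * L i k) * Y k := by
        rw [Finset.sum_mul]; exact Finset.sum_congr rfl fun i _ => by ring
    _ = 0 := by rw [this]; ring

/-- a nonnegative function with bounded integrals cannot stay above `κ` on long windows -/
theorem window {w : ℝ → ℝ} (hw : LocallyIntegrable w volume) (h0 : ∀ t, 0 ≤ w t) {S C : ℝ}
    (hC : ∀ T, S ≤ T → ∫ s in S..T, w s ≤ C) {h κ : ℝ} (hh : 0 < h) (hκ : 0 < κ) :
    ∀ᶠ t in atTop, ¬ (∀ᵐ s ∂volume, s ∈ Set.Icc t (t + h) → κ ≤ w s) := by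
  have ii : ∀ a b, IntervalIntegrable w volume a b := fun a b =>
    (hw.integrableOn_isCompact isCompact_uIcc).intervalIntegrable
  set I : ℝ → ℝ := fun T => ∫ s in S..T, w s with hI
  have hd : ∀ a b, I b - I a = ∫ s in a..b, w s := fun a b =>
    intervalIntegral.integral_interval_sub_left (ii _ _) (ii _ _)
  have hmono : Monotone I := by
    intro a b hab
    have : 0 ≤ I b - I a := by
      rw [hd]; exact intervalIntegral.integral_nonneg hab fun t _ => h0 t
    linarith
  have hbdd : BddAbove (Set.range I) := by
    refine ⟨C, ?_⟩
    rintro _ ⟨T, rfl⟩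
    exact (hmono (le_max_left T S)).trans (hC _ (le_max_right _ _))
  have ht := tendsto_atTop_ciSup hmono hbdd
  have ht2 : Tendsto (fun t => I (t + h) - I t) atTop (nhds 0) := by
    have := (ht.comp (tendsto_atTop_add_const_right atTop h tendsto_id)).sub ht
    simpa using this
  filter_upwards [ht2.eventually (gt_mem_nhds (mul_pos hκ hh))] with t h1 h2
  rw [hd] at h1
  have h3 : ∫ s in t..(t+h), κ ≤ ∫ s in t..(t+h), w s := by
    apply intervalIntegral.integral_mono_ae_restrict (by linarith) (by simp) (ii _ _)
    filter_upwards [ae_restrict_of_ae h2, ae_restrict_mem measurableSet_Icc] with s h4 h5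
    exact h4 h5
  simp at h3
  nlinarith
end

section
variable {n : ℕ} {L : Fin n → Fin n → ℝ} {g : ℝ → ℝ} {x γ : ℝ → Fin n → ℝ}

theorem UU_nonneg (θ : ℝ) {S T : ℝ} (hT : S ≤ T) (j : Fin n) : 0 ≤ UU g γ θ S T j :=
  intervalIntegral.integral_nonneg hT fun t _ => uu_nonneg g γ θ j t

theorem Sol.UU_zero (h : Sol L g x γ) {θ S T : ℝ} (hS : 0 ≤ S) (hT : S ≤ T) {j : Fin n}
    (hj : ∀ t, S ≤ t → x t j ≤ θ) : UU g γ θ S T j = 0 := by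
  rw [UU, ← intervalIntegral.integral_zero (a := S) (b := T) (μ := volume)]
  apply intervalIntegral.integral_congr_ae
  filter_upwards [h.uu_zero θ] with t ht h1
  rw [Set.uIoc_of_le hT] at h1
  exact ht (hS.trans h1.1.le) j (hj t h1.1.le)

theorem Sol.core0 (h : Sol L g x γ) (hg : StrictMono g)
    (hL1 : ∀ i j, i ≠ j → L i j ≤ 0) (hL2 : ∀ i, ∑ j, L i j = 0) (θ : ℝ) {S T : ℝ}
    (hS : 0 ≤ S) (hT : S ≤ T) (i : Fin n) :
    ∑ k, L i k * UU g γ θ S T k ≤ max (x S i - θ) 0 - max (x T i - θ) 0 := by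
  have := h.core hg hL1 hL2 θ hS hT i i 0 (Or.inl rfl)
  linarith

theorem Sol.follower (h : Sol L g x γ) (hg : StrictMono g)
    (hL1 : ∀ i j, i ≠ j → L i j ≤ 0) (hL2 : ∀ i, ∑ j, L i j = 0) {r : Fin n}
    (hr : ∀ w, Relation.ReflTransGen (fun a b => a ≠ b ∧ L b a < 0) r w)
    {θ S : ℝ} (hS : 0 ≤ S) (hx : ∀ t, S ≤ t → x t r ≤ θ) :
    ∃ C, ∀ j, ∀ T, S ≤ T → UU g γ θ S T j ≤ C := by
  obtain ⟨K, hK, H⟩ := graph_bound hL1 hL2 hr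
  set C := ∑ i, max (x S i - θ) 0 with hC
  have hC0 : 0 ≤ C := Finset.sum_nonneg fun i _ => le_max_right _ _
  refine ⟨K * C, fun j T hT => ?_⟩
  have := H C hC0 (UU g γ θ S T) (fun i => ?_) j
  · rw [h.UU_zero hS hT hx] at this
    linarith
  · have h1 := h.core0 hg hL1 hL2 θ hS hT i
    have h2 : max (x S i - θ) 0 ≤ C :=
      Finset.single_le_sum (f := fun i => max (x S i - θ) 0)
        (fun i _ => le_max_right _ _) (Finset.mem_univ i)
    have h3 := le_max_right (x T i - θ) 0
    linarith

theorem Sol.le_of_init (h : Sol L g x γ) (hg : StrictMono g)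
    (hL1 : ∀ i j, i ≠ j → L i j ≤ 0) (hL2 : ∀ i, ∑ j, L i j = 0) {r : Fin n}
    (hr : ∀ w, Relation.ReflTransGen (fun a b => a ≠ b ∧ L b a < 0) r w)
    {η : Fin n → ℝ} (h0 : ∀ i, 0 ≤ η i) (hη : ∀ j, ∑ i, η i * L i j = 0) (hηr : 0 < η r)
    {θ : ℝ} (hx : ∀ i, x 0 i ≤ θ) (t : ℝ) (ht : 0 ≤ t) (i : Fin n) : x t i ≤ θ := by
  have hc : ∀ T, 0 ≤ T → ∀ i, ∑ k, L i k * UU g γ θ 0 T k ≤ - max (x T i - θ) 0 := by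
    intro T hT i
    have h1 := h.core0 hg hL1 hL2 θ le_rfl hT i
    have h2 : max (x 0 i - θ) 0 = 0 := max_eq_right (by linarith [hx i])
    linarith
  have hxr : ∀ T, 0 ≤ T → x T r ≤ θ := by
    intro T hT
    have h1 := null_pair hη (UU g γ θ 0 T)
    have h2 : ∑ i, η i * ∑ k, L i k * UU g γ θ 0 T k ≤ ∑ i, η i * (- max (x T i - θ) 0) :=
      Finset.sum_le_sum fun i _ => mul_le_mul_of_nonneg_left (hc T hT i) (h0 i)
    have h3 : ∑ i, η i * (- max (x T i - θ) 0) ≤ η r * (- max (x T r - θ) 0) := by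
      rw [← Finset.add_sum_erase _ _ (Finset.mem_univ r)]
      have : ∑ i ∈ Finset.univ.erase r, η i * (- max (x T i - θ) 0) ≤ 0 :=
        Finset.sum_nonpos fun i _ => by nlinarith [h0 i, le_max_right (x T i - θ) 0]
      linarith
    have h4 := le_max_left (x T r - θ) 0
    by_contra hcon
    have h5 : 0 < max (x T r - θ) 0 := by linarith
    nlinarith [mul_pos hηr h5]
  obtain ⟨K, hK, H⟩ := graph_bound hL1 hL2 hr
  have hU : ∀ j, UU g γ θ 0 t j = 0 := by
    intro j
    refine le_antisymm ?_ (UU_nonneg θ ht j)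
    have := H 0 le_rfl (UU g γ θ 0 t)
      (fun i => (hc t ht i).trans (by linarith [le_max_right (x t i - θ) 0])) j
    rw [h.UU_zero le_rfl ht hxr] at this
    linarith
  have h1 := hc t ht i
  simp only [hU, mul_zero, Finset.sum_const_zero] at h1
  linarith [le_max_left (x t i - θ) 0]

/-- A priori bounds. -/
theorem Sol.bounded (h : Sol L g x γ) (hg : StrictMono g)
    (hL1 : ∀ i j, i ≠ j → L i j ≤ 0) (hL2 : ∀ i, ∑ j, L i j = 0) {r : Fin n}
    (hr : ∀ w, Relation.ReflTransGen (fun a b => a ≠ b ∧ L b a < 0) r w)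
    {η : Fin n → ℝ} (h0 : ∀ i, 0 ≤ η i) (hη : ∀ j, ∑ i, η i * L i j = 0) (hηr : 0 < η r) :
    ∃ R : ℝ, 0 < R ∧ ∀ t, 0 ≤ t → ∀ i, |x t i| ≤ R := by
  have hle : ∀ i, |x 0 i| ≤ ∑ i, |x 0 i| := fun i =>
    Finset.single_le_sum (f := fun i => |x 0 i|) (fun i _ => abs_nonneg _) (Finset.mem_univ i)
  have hs : 0 ≤ ∑ i, |x 0 i| := Finset.sum_nonneg fun i _ => abs_nonneg _
  refine ⟨∑ i, |x 0 i| + 1, by linarith, fun t ht i => abs_le.mpr ⟨?_, ?_⟩⟩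
  · have := h.neg.le_of_init (strictMono_neg hg) hL1 hL2 hr h0 hη hηr
      (θ := ∑ i, |x 0 i| + 1) (fun i => by linarith [hle i, neg_abs_le (x 0 i)]) t ht i
    linarith
  · exact h.le_of_init hg hL1 hL2 hr h0 hη hηr
      (fun i => by linarith [hle i, le_abs_self (x 0 i)]) t ht i

theorem Sol.lip (h : Sol L g x γ) (hg : StrictMono g)
    {R : ℝ} (hR : ∀ t, 0 ≤ t → ∀ i, |x t i| ≤ R) :
    ∃ B : ℝ, 0 < B ∧ ∀ s t, 0 ≤ s → s ≤ t → ∀ i, |x t i - x s i| ≤ B * (t - s) := by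
  set D := |g (R + 1)| + |g (-R - 1)| with hD
  have hD0 : 0 ≤ D := by positivity
  have hγ : ∀ᵐ t ∂volume, 0 ≤ t → ∀ j, |γ t j| ≤ D := by
    filter_upwards [h.low, h.up] with t h1 h2 ht j
    have h3 := abs_le.mp (hR t ht j)
    have h4 := h1 ht j (-R - 1) (by linarith)
    have h5 := h2 ht j (R + 1) (by linarith)
    rw [abs_le]
    constructor
    · linarith [neg_abs_le (g (-R - 1)), abs_nonneg (g (R + 1))]
    · linarith [le_abs_self (g (R + 1)), abs_nonneg (g (-R - 1))]
  set B := ∑ i, ∑ j, |L i j| * D with hB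
  have hB0 : 0 ≤ B := Finset.sum_nonneg fun i _ => Finset.sum_nonneg fun j _ => by positivity
  refine ⟨B + 1, by linarith, fun s t hs hst i => ?_⟩
  have ii := fun a b => locint_ii (h.locint_f i) a b
  have e : x t i - x s i = - ∫ u in s..t, ∑ j, L i j * γ u j := by
    rw [h.sol t (hs.trans hst) i, h.sol s hs i,
      ← intervalIntegral.integral_interval_sub_left (ii 0 t) (ii 0 s)]
    ring
  rw [e, abs_neg, ← Real.norm_eq_abs]
  have := intervalIntegral.norm_integral_le_of_norm_le_const_ae (a := s) (b := t) (C := B + 1)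
    (f := fun u => ∑ j, L i j * γ u j) ?_
  · rwa [abs_of_nonneg (by linarith : 0 ≤ t - s)] at this
  · filter_upwards [hγ] with u hu hmem
    rw [Set.uIoc_of_le hst] at hmem
    have hu := hu (hs.trans hmem.1.le)
    rw [Real.norm_eq_abs]
    calc |∑ j, L i j * γ u j| ≤ ∑ j, |L i j * γ u j| := Finset.abs_sum_le_sum_abs _ _
      _ ≤ ∑ j, |L i j| * D := Finset.sum_le_sum fun j _ => by
          rw [abs_mul]; exact mul_le_mul_of_nonneg_left (hu j) (abs_nonneg _)
      _ ≤ B := Finset.single_le_sum (f := fun i => ∑ j, |L i j| * D)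
          (fun i _ => Finset.sum_nonneg fun j _ => by positivity) (Finset.mem_univ i)
      _ ≤ B + 1 := by linarith

/-- If `x j` is clearly above `θ` then the excess is bounded below. -/
theorem Sol.uu_lower (h : Sol L g x γ) (hg : StrictMono g) (θ : ℝ) {ε : ℝ} (hε : 0 < ε) :
    ∃ κ : ℝ, 0 < κ ∧ ∀ᵐ t ∂volume, 0 ≤ t → ∀ j, θ + ε ≤ x t j → κ ≤ uu g γ θ j t := by
  refine ⟨g (θ + ε / 2) - g (θ + ε / 3), by linarith [hg (show θ + ε / 3 < θ + ε / 2 by linarith)],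
    ?_⟩
  filter_upwards [h.low] with t ht h0 j hj
  have h1 := ht h0 j (θ + ε / 2) (by linarith)
  have h2 := rl_le hg (show θ < θ + ε / 3 by linarith)
  have h3 := le_max_left (γ t j - rl g θ) 0
  rw [uu]
  linarith

theorem WW_bound (h : Sol L g x γ) (hg : StrictMono g)
    (hL1 : ∀ i j, i ≠ j → L i j ≤ 0) (hL2 : ∀ i, ∑ j, L i j = 0)
    {η : Fin n → ℝ} (h0 : ∀ i, 0 ≤ η i) (hη : ∀ j, ∑ i, η i * L i j = 0)
    {i j : Fin n} (hi : 0 < η i) (hij : i ≠ j) (hL : L i j < 0) (θ : ℝ) :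
    ∃ C, ∀ T, 0 ≤ T → WW g x γ θ 0 T i j ≤ C := by
  refine ⟨(∑ k, η k * max (x 0 k - θ) 0) / (η i * (- L i j)), fun T hT => ?_⟩
  rw [le_div_iff₀ (mul_pos hi (by linarith))]
  have h1 := null_pair hη (UU g γ θ 0 T)
  have h2 := h.core hg hL1 hL2 θ le_rfl hT i j (L i j) (Or.inr ⟨hij, rfl⟩)
  rw [← Finset.add_sum_erase _ _ (Finset.mem_univ i)] at h1 ⊢
  have h3 : ∑ k ∈ Finset.univ.erase i, η k * ∑ l, L k l * UU g γ θ 0 T l ≤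
      ∑ k ∈ Finset.univ.erase i, η k * max (x 0 k - θ) 0 := by
    refine Finset.sum_le_sum fun k _ => mul_le_mul_of_nonneg_left ?_ (h0 k)
    linarith [h.core0 hg hL1 hL2 θ le_rfl hT k, le_max_right (x T k - θ) 0]
  have h4 : η i * (∑ k, L i k * UU g γ θ 0 T k - L i j * WW g x γ θ 0 T i j) ≤
      η i * max (x 0 i - θ) 0 :=
    mul_le_mul_of_nonneg_left (by linarith [le_max_right (x T i - θ) 0]) hi.le
  linarith

theorem Sol.cross (h : Sol L g x γ) (hg : StrictMono g)
    (hL1 : ∀ i j, i ≠ j → L i j ≤ 0) (hL2 : ∀ i, ∑ j, L i j = 0)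
    {η : Fin n → ℝ} (h0 : ∀ i, 0 ≤ η i) (hη : ∀ j, ∑ i, η i * L i j = 0)
    {B : ℝ} (hB : 0 < B) (hlip : ∀ s t, 0 ≤ s → s ≤ t → ∀ i, |x t i - x s i| ≤ B * (t - s))
    {i j : Fin n} (hi : 0 < η i) (hij : i ≠ j) (hL : L i j < 0) (θ : ℝ) {ε : ℝ} (hε : 0 < ε) :
    ∀ᶠ t in atTop, ¬ (x t i ≤ θ - ε ∧ θ + 2 * ε ≤ x t j) := by
  obtain ⟨C, hC⟩ := WW_bound h hg hL1 hL2 h0 hη hi hij hL θ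
  obtain ⟨κ, hκ, hlow⟩ := h.uu_lower hg θ hε
  have hwin := window (h.locint_w θ i j) (fun t => by
    split_ifs
    · exact uu_nonneg _ _ _ _ _
    · exact le_rfl) hC (div_pos hε hB) hκ
  filter_upwards [hwin, eventually_ge_atTop 0] with t h1 ht ⟨h2, h3⟩
  apply h1
  filter_upwards [hlow] with s hs hmem
  have hs0 : 0 ≤ s := ht.trans hmem.1
  have hb : B * (s - t) ≤ ε := by
    have : s - t ≤ ε / B := by linarith [hmem.2]
    rw [le_div_iff₀ hB] at this
    linarith
  have h4 := abs_le.mp (hlip t s ht hmem.1 i)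
  have h5 := abs_le.mp (hlip t s ht hmem.1 j)
  rw [if_pos (by linarith)]
  exact hs hs0 j (by linarith)

theorem Sol.edge_le (h : Sol L g x γ) (hg : StrictMono g)
    (hL1 : ∀ i j, i ≠ j → L i j ≤ 0) (hL2 : ∀ i, ∑ j, L i j = 0)
    {η : Fin n → ℝ} (h0 : ∀ i, 0 ≤ η i) (hη : ∀ j, ∑ i, η i * L i j = 0)
    {B R : ℝ} (hB : 0 < B) (hlip : ∀ s t, 0 ≤ s → s ≤ t → ∀ i, |x t i - x s i| ≤ B * (t - s))
    (hR : ∀ t, 0 ≤ t → ∀ i, |x t i| ≤ R)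
    {i j : Fin n} (hi : 0 < η i) (hij : i ≠ j) (hL : L i j < 0) {ε : ℝ} (hε : 0 < ε) :
    ∀ᶠ t in atTop, x t j - x t i < 4 * ε := by
  have hall : ∀ᶠ t in atTop, ∀ k ∈ Finset.Icc (⌈-R / ε⌉) (⌈R / ε⌉),
      ¬ (x t i ≤ (ε * k + ε) - ε ∧ (ε * k + ε) + 2 * ε ≤ x t j) :=
    (Filter.eventually_all_finset _).mpr fun k _ =>
      h.cross hg hL1 hL2 h0 hη hB hlip hi hij hL _ hε
  filter_upwards [hall, eventually_ge_atTop 0] with t h1 ht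
  by_contra hcon
  have h2 := abs_le.mp (hR t ht i)
  refine h1 ⌈x t i / ε⌉ ?_ ?_
  · rw [Finset.mem_Icc]
    constructor <;> apply Int.ceil_le_ceil
    · exact (div_le_div_iff_of_pos_right hε).mpr h2.1
    · exact (div_le_div_iff_of_pos_right hε).mpr h2.2
  · have h3 := Int.le_ceil (x t i / ε)
    have h4 := (Int.ceil_lt_add_one (x t i / ε)).le
    rw [div_le_iff₀ hε] at h3
    have h5 : ε * (⌈x t i / ε⌉ : ℝ) ≤ x t i + ε := by
      calc ε * (⌈x t i / ε⌉ : ℝ) ≤ ε * (x t i / ε + 1) := mul_le_mul_of_nonneg_left h4 hε.le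
        _ = x t i + ε := by field_simp
    constructor <;> linarith

theorem Sol.upper (h : Sol L g x γ) (hg : StrictMono g)
    (hL1 : ∀ i j, i ≠ j → L i j ≤ 0) (hL2 : ∀ i, ∑ j, L i j = 0) {r : Fin n}
    (hr : ∀ w, Relation.ReflTransGen (fun a b => a ≠ b ∧ L b a < 0) r w)
    {B : ℝ} (hB : 0 < B) (hlip : ∀ s t, 0 ≤ s → s ≤ t → ∀ i, |x t i - x s i| ≤ B * (t - s))
    {c : ℝ} (hc : Tendsto (fun t => x t r) atTop (nhds c)) (j : Fin n) {ε : ℝ} (hε : 0 < ε) :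
    ∀ᶠ t in atTop, x t j < c + 3 * ε := by
  obtain ⟨S0, hS0⟩ := eventually_atTop.mp
    (hc.eventually (gt_mem_nhds (show c < c + ε by linarith)))
  obtain ⟨C, hC⟩ := h.follower hg hL1 hL2 hr (θ := c + ε) (S := max S0 0) (le_max_right _ _)
    (fun t ht => (hS0 t ((le_max_left _ _).trans ht)).le)
  obtain ⟨κ, hκ, hlow⟩ := h.uu_lower hg (c + ε) hε
  have hwin := window (h.locint_uu (c + ε) j) (fun t => uu_nonneg _ _ _ _ _) (hC j)
    (div_pos hε hB) hκ
  filter_upwards [hwin, eventually_ge_atTop 0] with t h1 ht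
  by_contra hcon
  apply h1
  filter_upwards [hlow] with s hs hmem
  have hb : B * (s - t) ≤ ε := by
    have : s - t ≤ ε / B := by linarith [hmem.2]
    rw [le_div_iff₀ hB] at this
    linarith
  have h5 := abs_le.mp (hlip t s ht hmem.1 j)
  exact hs (ht.trans hmem.1) j (by linarith)

theorem lip_neg {B : ℝ} (hlip : ∀ s t, 0 ≤ s → s ≤ t → ∀ i, |x t i - x s i| ≤ B * (t - s)) :
    ∀ s t, 0 ≤ s → s ≤ t → ∀ i, |(fun t i => - x t i) t i - (fun t i => - x t i) s i|
      ≤ B * (t - s) := by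
  intro s t hs hst i
  have : (fun t i => - x t i) t i - (fun t i => - x t i) s i = -(x t i - x s i) := by ring
  rw [this, abs_neg]
  exact hlip s t hs hst i

theorem Sol.consensus (h : Sol L g x γ) (hg : StrictMono g)
    (hL1 : ∀ i j, i ≠ j → L i j ≤ 0) (hL2 : ∀ i, ∑ j, L i j = 0) {r : Fin n}
    (hr : ∀ w, Relation.ReflTransGen (fun a b => a ≠ b ∧ L b a < 0) r w)
    {ξ : Fin n → ℝ} (hξ : ∀ j, ∑ i, ξ i * L i j = 0) (hξ1 : ∑ i, ξ i = 1) :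
    ∀ i, Tendsto (fun t => x t i) atTop (nhds (∑ i, ξ i * x 0 i)) := by
  have hη := abs_null hL1 hL2 hξ
  have h0 : ∀ i, 0 ≤ |ξ i| := fun i => abs_nonneg _
  have hpath : ∀ {a w : Fin n}, Relation.ReflTransGen (fun a b => a ≠ b ∧ L b a < 0) a w →
      0 < |ξ w| → 0 < |ξ a| := by
    intro a w hw hpos
    induction hw using Relation.ReflTransGen.head_induction_on with
    | refl => exact hpos
    | head hab _ ih => exact pos_pred hL1 h0 hη ih hab.1.symm hab.2
  have hηr : 0 < |ξ r| := by
    obtain ⟨k, -, hk⟩ := Finset.exists_ne_zero_of_sum_ne_zero (hξ1.trans_ne one_ne_zero)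
    exact hpath (hr k) (abs_pos.mpr hk)
  obtain ⟨R, -, hR⟩ := h.bounded hg hL1 hL2 hr h0 hη hηr
  obtain ⟨B, hB, hlip⟩ := h.lip hg hR
  have hedge : ∀ {i j : Fin n}, 0 < |ξ i| → i ≠ j → L i j < 0 →
      Tendsto (fun t => x t j - x t i) atTop (nhds 0) := by
    intro i j hi hij hL
    rw [Metric.tendsto_nhds]
    intro e he
    have h1 := h.edge_le hg hL1 hL2 h0 hη hB hlip hR hi hij hL (ε := e / 4) (by linarith)
    have h2 := h.neg.edge_le (strictMono_neg hg) hL1 hL2 h0 hη hB (lip_neg hlip)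
      (fun t ht i => by simpa using hR t ht i) hi hij hL (ε := e / 4) (by linarith)
    filter_upwards [h1, h2] with t h1 h2
    rw [Real.dist_eq, abs_lt]
    constructor <;> linarith
  have hlead : ∀ {a w : Fin n}, Relation.ReflTransGen (fun a b => a ≠ b ∧ L b a < 0) a w →
      0 < |ξ w| → Tendsto (fun t => x t w - x t a) atTop (nhds 0) := by
    intro a w hw hpos
    induction hw using Relation.ReflTransGen.head_induction_on with
    | refl => simp
    | @head a b hab hbw ih =>
      have := ih.sub (hedge (hpath hbw hpos) hab.1.symm hab.2)
      simpa using this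
  have hcons : ∀ t, 0 ≤ t → ∑ i, ξ i * x t i = ∑ i, ξ i * x 0 i := by
    intro t ht
    have h1 : ∀ i, x t i = x 0 i - ∑ k, L i k * ∫ s in (0:ℝ)..t, γ s k := by
      intro i
      rw [h.sol t ht i, intervalIntegral.integral_finsetSum]
      · simp
      · intro k _
        exact (locint_ii (h.int k) _ _).const_mul _
    have h2 := null_pair hξ (fun k => ∫ s in (0:ℝ)..t, γ s k)
    simp only [h1, mul_sub, Finset.sum_sub_distrib]
    linarith
  set c := ∑ i, ξ i * x 0 i with hcdef
  have hxr : Tendsto (fun t => x t r) atTop (nhds c) := by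
    have h1 : Tendsto (fun t => c - ∑ k, ξ k * (x t k - x t r)) atTop
        (nhds (c - ∑ k : Fin n, 0)) := by
      apply Tendsto.sub tendsto_const_nhds
      apply tendsto_finsetSum
      intro k _
      by_cases hk : ξ k = 0
      · simp [hk]
      · simpa using (hlead (hr k) (abs_pos.mpr hk)).const_mul (ξ k)
    simp only [Finset.sum_const_zero, sub_zero] at h1
    refine h1.congr' ?_
    filter_upwards [eventually_ge_atTop 0] with t ht
    simp only [mul_sub, Finset.sum_sub_distrib, ← Finset.sum_mul, hξ1, hcons t ht]
    ring
  intro j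
  rw [Metric.tendsto_nhds]
  intro e he
  have h1 := h.upper hg hL1 hL2 hr hB hlip hxr j (ε := e / 3) (by linarith)
  have h2 := h.neg.upper (strictMono_neg hg) hL1 hL2 hr hB (lip_neg hlip) hxr.neg j
    (ε := e / 3) (by linarith)
  filter_upwards [h1, h2] with t h1 h2
  rw [Real.dist_eq, abs_lt]
  constructor <;> linarith
end

/-- sufficiency part of Theorem 1: If `G(L)` has a spanning tree,
`g` is strictly increasing with only finitely many discontinuity points in every
bounded interval, and `ξ` is a normalized left null vector of `L`, then every Filippov
solution of `ẋ_i = -∑_j L i j g(x_j)` with initial value `x0` achieves consensus at the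
value `∑ i, ξ i * x0 i`. -/
theorem consensus_of_spanning_tree
    (n : ℕ) (L : Matrix (Fin n) (Fin n) ℝ)
    (hL1 : ∀ i j, i ≠ j → L i j ≤ 0) (hL2 : ∀ i, ∑ j, L i j = 0)
    (hroot : ∃ r : Fin n, ∀ w : Fin n,
      Relation.ReflTransGen (fun a b => a ≠ b ∧ L b a < 0) r w)
    (g : ℝ → ℝ) (hg : StrictMono g)
    (hgfin : ∀ a b : ℝ, {z : ℝ | z ∈ Set.Icc a b ∧ ¬ ContinuousAt g z}.Finite)
    (ξ : Fin n → ℝ) (hξ : ∀ j, ∑ i, ξ i * L i j = 0) (hξ1 : ∑ i, ξ i = 1)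
    (x0 : Fin n → ℝ) (x γ : ℝ → Fin n → ℝ)
    (hxcont : Continuous x) (hγmeas : Measurable γ)
    (hγint : LocallyIntegrable γ volume)
    (hγK : ∀ᵐ t ∂volume, 0 ≤ t →
      ∀ j, γ t j ∈ Set.Icc (leftLim g (x t j)) (rightLim g (x t j)))
    (hsol : ∀ t, 0 ≤ t → ∀ i,
      x t i = x0 i - ∫ s in (0:ℝ)..t, ∑ j, L i j * γ s j) :
    ∀ i, Tendsto (fun t => x t i) atTop (nhds (∑ i, ξ i * x0 i)) := by
  obtain ⟨r, hr⟩ := hroot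
  have hx0 : x 0 = x0 := by
    funext i
    have := hsol 0 le_rfl i
    simpa using this
  have hS : Sol (fun i j => L i j) g x γ :=
    { cont := fun i => (continuous_apply i).comp hxcont
      int := fun i => by
        intro t
        obtain ⟨s, hs, hi⟩ := hγint t
        exact ⟨s, hs, Integrable.eval hi i⟩
      low := by
        filter_upwards [hγK] with t ht h0 j z hz
        exact (hg.monotone.le_leftLim hz).trans (ht h0 j).1
      up := by
        filter_upwards [hγK] with t ht h0 j z hz
        exact (ht h0 j).2.trans (hg.monotone.rightLim_le hz)
      sol := fun t ht i => by
        rw [hx0]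
        exact hsol t ht i }
  have := hS.consensus hg hL1 hL2 hr hξ hξ1
  rw [hx0] at this
  exact this
end

section
/- (Necessity part of Theorem 1.) Let L be a graph Laplacian such that G(L) does not have a spanning tree, and let g : ℝ → ℝ be strictly increasing. Then there exists an initial value x0 : Fin n → ℝ and a Filippov solution (x, γ) of the protocol ẋ_i = -∑_j L i j g(x_j) with initial value x0 such that for no c ∈ ℝ do all components x t i converge to c as t → ∞; i.e., consensus fails for some initial value. -/
open MeasureTheory Function Filter

theorem filippov_aux_sup (g : ℝ → ℝ) (hg : StrictMono g) (a b y : ℝ) (ha : g a ≤ y) (hb : y ≤ g b) :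
    y ∈ Set.Icc (leftLim g (sSup {z | g z ≤ y})) (rightLim g (sSup {z | g z ≤ y})) := by
  have hne : Set.Nonempty {z | g z ≤ y} := ⟨a, ha⟩
  have hbd : BddAbove {z | g z ≤ y} := ⟨b, fun z hz => hg.le_iff_le.1 (le_trans hz hb)⟩
  constructor
  · refine le_of_tendsto (hg.monotone.tendsto_leftLim _) ?_
    filter_upwards [self_mem_nhdsWithin] with t ht
    obtain ⟨s, hs, hts⟩ := exists_lt_of_lt_csSup hne ht
    exact le_trans (hg.monotone hts.le) hs
  · refine ge_of_tendsto (hg.monotone.tendsto_rightLim _) ?_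
    filter_upwards [self_mem_nhdsWithin] with t ht
    by_contra h
    exact absurd (le_csSup hbd (show t ∈ {z | g z ≤ y} from (not_le.1 h).le)) (not_le.2 ht)

theorem laplacian_aux_left {n : ℕ} (L : Matrix (Fin n) (Fin n) ℝ) (hL2 : ∀ i, ∑ j, L i j = 0)
    (A : Fin n → Prop) (u : Fin n) (hu : A u) (hA : ∀ i j, A i → ¬ A j → L i j = 0) :
    ∃ w : Fin n → ℝ, w ≠ 0 ∧ (∀ i, ¬ A i → w i = 0) ∧ Matrix.vecMul w L = 0 := by
  classical
  let M : Matrix {i // A i} {i // A i} ℝ := L.submatrix Subtype.val Subtype.val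
  have h1 : ∃ v, v ≠ 0 ∧ M.mulVec v = 0 := by
    refine ⟨fun _ => 1, fun h => one_ne_zero (congrFun h ⟨u, hu⟩), ?_⟩
    funext i
    have h := hL2 i
    rw [← Fintype.sum_subtype_add_sum_subtype A] at h
    rw [Finset.sum_eq_zero (fun (j : {j // ¬ A j}) _ => hA i j i.2 j.2), add_zero] at h
    simpa [M, Matrix.mulVec, dotProduct] using h
  obtain ⟨w, hw0, hw⟩ := Matrix.exists_vecMul_eq_zero_iff.2 (Matrix.exists_mulVec_eq_zero_iff.1 h1)
  refine ⟨fun i => if h : A i then w ⟨i, h⟩ else 0, ?_, fun i hi => by simp [hi], ?_⟩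
  · intro h
    apply hw0
    funext i
    have := congrFun h i
    simpa [i.2] using this
  · funext j
    have key : ∑ i : {i // A i}, w i * L i j = 0 := by
      by_cases hj : A j
      · exact congrFun hw ⟨j, hj⟩
      · exact Finset.sum_eq_zero fun i _ => by rw [hA i j i.2 hj, mul_zero]
    simp only [Matrix.vecMul, dotProduct, Pi.zero_apply]
    rw [← Fintype.sum_subtype_add_sum_subtype A]
    rw [Finset.sum_eq_zero (s := (Finset.univ : Finset {j // ¬ A j})), add_zero]
    · rw [← key]
      exact Finset.sum_congr rfl fun i _ => by simp [i.2]
    · intro i _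
      simp [i.2]

theorem laplacian_aux_ker {n : ℕ} (hn : 0 < n) (L : Matrix (Fin n) (Fin n) ℝ)
    (hL1 : ∀ i j, i ≠ j → L i j ≤ 0) (hL2 : ∀ i, ∑ j, L i j = 0)
    (hnoroot : ¬ ∃ r : Fin n, ∀ w : Fin n,
      Relation.ReflTransGen (fun a b => a ≠ b ∧ L b a < 0) r w) :
    ∃ v : Fin n → ℝ, L.mulVec v = 0 ∧ ∃ p q, v p < v q := by
  classical
  haveI : Nonempty (Fin n) := ⟨⟨0, hn⟩⟩
  set R := Relation.ReflTransGen (fun a b : Fin n => a ≠ b ∧ L b a < 0) with hR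
  obtain ⟨u, v, huv⟩ : ∃ u v, ∀ z, R z u → ¬ R z v := by
    by_contra! hcon
    apply hnoroot
    haveI : IsTrans (Fin n) (fun a b => R b a) := ⟨fun a b c h1 h2 => h2.trans h1⟩
    have D : Directed (fun a b => R b a) (id : Fin n → Fin n) := fun a b => hcon a b
    obtain ⟨z, hz⟩ := D.finite_le (id : Fin n → Fin n)
    exact ⟨z, hz⟩
  have hcl : ∀ x i j, R i x → ¬ R j x → L i j = 0 := by
    intro x i j hi hj
    by_contra h
    have hij : i ≠ j := by rintro rfl; exact hj hi
    exact hj (Relation.ReflTransGen.head ⟨hij.symm, lt_of_le_of_ne (hL1 i j hij) h⟩ hi)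
  obtain ⟨w1, h10, h1s, h1⟩ := laplacian_aux_left L hL2 (fun i => R i u) u .refl (hcl u)
  obtain ⟨w2, h20, h2s, h2⟩ := laplacian_aux_left L hL2 (fun i => R i v) v .refl (hcl v)
  have hli : LinearIndependent ℝ ![w1, w2] := by
    rw [LinearIndependent.pair_iff]
    intro s t hst
    obtain ⟨i, hi⟩ := Function.ne_iff.1 h10
    obtain ⟨j, hj⟩ := Function.ne_iff.1 h20
    have hiu : R i u := by by_contra h; exact hi (h1s i h)
    have hjv : R j v := by by_contra h; exact hj (h2s j h)
    have e1 := congrFun hst i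
    have e2 := congrFun hst j
    simp only [Pi.add_apply, Pi.smul_apply, smul_eq_mul, Pi.zero_apply] at e1 e2 hi hj
    rw [h2s i (huv i hiu)] at e1
    rw [h1s j (fun h => huv j h hjv)] at e2
    constructor
    · simpa [hi] using e1
    · simpa [hj] using e2
  have hk : 2 ≤ Module.finrank ℝ (LinearMap.ker (L.transpose.mulVecLin)) := by
    have hmem : ∀ k, ![w1, w2] k ∈ LinearMap.ker (L.transpose.mulVecLin) := by
      intro k
      fin_cases k <;> simp [Matrix.mulVec_transpose, h1, h2]
    have hsp : Submodule.span ℝ (Set.range ![w1, w2]) ≤ LinearMap.ker (L.transpose.mulVecLin) := by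
      rw [Submodule.span_le]
      rintro _ ⟨k, rfl⟩
      exact hmem k
    have := Submodule.finrank_mono hsp
    rw [finrank_span_eq_card hli] at this
    simpa using this
  have r1 := LinearMap.finrank_range_add_finrank_ker (L.transpose.mulVecLin)
  have r2 := LinearMap.finrank_range_add_finrank_ker (L.mulVecLin)
  have r3 : L.transpose.rank = L.rank := Matrix.rank_transpose L
  unfold Matrix.rank at r3
  have hk2 : 2 ≤ Module.finrank ℝ (LinearMap.ker L.mulVecLin) := by omega
  by_contra! hcon
  have hle : LinearMap.ker L.mulVecLin ≤ Submodule.span ℝ {(fun _ => 1 : Fin n → ℝ)} := by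
    intro x hx
    have hx' : L.mulVec x = 0 := by simpa using hx
    rw [Submodule.mem_span_singleton]
    refine ⟨x ⟨0, hn⟩, ?_⟩
    funext i
    simpa using le_antisymm (hcon x hx' i ⟨0, hn⟩) (hcon x hx' ⟨0, hn⟩ i)
  have h3 := Submodule.finrank_mono hle
  have h4 := finrank_span_le_card (R := ℝ) ({(fun _ => 1 : Fin n → ℝ)} : Set (Fin n → ℝ))
  simp at h4
  omega

/-- necessity part of Theorem 1: If `G(L)` does not have a spanning tree,
then there is an initial value `x0` and a Filippov solution of
`ẋ_i = -∑_j L i j g(x_j)` starting at `x0` whose components do not all converge to a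
common value; i.e., consensus fails for some initial value. -/
theorem no_consensus_of_no_spanning_tree
    (n : ℕ) (hn : 0 < n) (L : Matrix (Fin n) (Fin n) ℝ)
    (hL1 : ∀ i j, i ≠ j → L i j ≤ 0) (hL2 : ∀ i, ∑ j, L i j = 0)
    (hnoroot : ¬ ∃ r : Fin n, ∀ w : Fin n,
      Relation.ReflTransGen (fun a b => a ≠ b ∧ L b a < 0) r w)
    (g : ℝ → ℝ) (hg : StrictMono g) :
    ∃ (x0 : Fin n → ℝ) (x γ : ℝ → Fin n → ℝ),
      Continuous x ∧ Measurable γ ∧ LocallyIntegrable γ volume ∧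
      (∀ᵐ t ∂volume, 0 ≤ t →
        ∀ j, γ t j ∈ Set.Icc (leftLim g (x t j)) (rightLim g (x t j))) ∧
      (∀ t, 0 ≤ t → ∀ i,
        x t i = x0 i - ∫ s in (0:ℝ)..t, ∑ j, L i j * γ s j) ∧
      ∀ c : ℝ, ¬ (∀ i, Tendsto (fun t => x t i) atTop (nhds c)) := by
  haveI : Nonempty (Fin n) := ⟨⟨0, hn⟩⟩
  obtain ⟨v, hv, p0, q0, hpq0⟩ := laplacian_aux_ker hn L hL1 hL2 hnoroot
  obtain ⟨p, hp⟩ := Finite.exists_min v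
  obtain ⟨q, hq⟩ := Finite.exists_max v
  have hpq : v p < v q := lt_of_le_of_lt (hp p0) (lt_of_lt_of_le hpq0 (hq q0))
  have hd : 0 < v q - v p := sub_pos.2 hpq
  have hg01 : 0 < g 1 - g 0 := sub_pos.2 (hg one_pos)
  obtain ⟨k, hk0, hk⟩ : ∃ k : ℝ, 0 < k ∧ k * (v q - v p) = g 1 - g 0 :=
    ⟨(g 1 - g 0) / (v q - v p), by positivity, by field_simp⟩
  let y : Fin n → ℝ := fun j => g 0 + k * (v j - v p)
  have hy0 : ∀ j, g 0 ≤ y j := fun j => by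
    have := mul_nonneg hk0.le (sub_nonneg.2 (hp j))
    simp only [y]; linarith
  have hy1 : ∀ j, y j ≤ g 1 := fun j => by
    have := mul_le_mul_of_nonneg_left (sub_le_sub_right (hq j) (v p)) hk0.le
    simp only [y]; linarith
  have hyp : y p = g 0 := by simp [y]
  have hyq : y q = g 1 := by simp only [y]; linarith
  have hLy : ∀ i, ∑ j, L i j * y j = 0 := fun i => by
    have h1 : ∑ j, L i j * v j = 0 := congrFun hv i
    have h2 : ∀ j, L i j * y j = (g 0 - k * v p) * L i j + k * (L i j * v j) := fun j => by
      simp only [y]; ring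
    simp only [h2, Finset.sum_add_distrib, ← Finset.mul_sum, h1, hL2 i, mul_zero, add_zero]
  let x0 : Fin n → ℝ := fun j => sSup {z | g z ≤ y j}
  have hs : ∀ a, sSup {z | g z ≤ g a} = a := fun a => by
    have : {z | g z ≤ g a} = Set.Iic a := by ext z; simp [hg.le_iff_le]
    rw [this, csSup_Iic]
  have hxp : x0 p = 0 := by simp only [x0, hyp, hs]
  have hxq : x0 q = 1 := by simp only [x0, hyq, hs]
  refine ⟨x0, fun _ => x0, fun _ => y, continuous_const, measurable_const,
    locallyIntegrable_const y, ?_, ?_, ?_⟩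
  · exact Eventually.of_forall fun t _ j => filippov_aux_sup g hg 0 1 (y j) (hy0 j) (hy1 j)
  · intro t _ i
    simp [hLy]
  · intro c h
    have e1 := tendsto_nhds_unique (h p) tendsto_const_nhds
    have e2 := tendsto_nhds_unique (h q) tendsto_const_nhds
    rw [hxp] at e1
    rw [hxq] at e2
    linarith
end

section
/- (Finite-time convergence part of Theorem 1.) Let L be a graph Laplacian such that G(L) is strongly connected, and let ξ : Fin n → ℝ satisfy ξ i > 0 for all i, ∑ i, ξ i = 1, and ∑ i, ξ i * L i j = 0 for every j. Let g : ℝ → ℝ be strictly increasing with only finitely many discontinuity points in every bounded interval. Let x0 : Fin n → ℝ, set x̄ = ∑ i, ξ i * x0 i, and suppose g is discontinuous at x̄, i.e., leftLim g x̄ < rightLim g x̄. Then every Filippov solution (x, γ) of the protocol ẋ_i = -∑_j L i j g(x_j) with initial value x0 reaches consensus in finite time: there exists T ≥ 0 such that x t i = x̄ for all t ≥ T and all i. -/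
open MeasureTheory Function Filter

namespace Consensus

/-- Lipschitz-type composition preserves absolute continuity. -/
lemma ac_comp {f : ℝ → ℝ} {a b : ℝ} (hf : AbsolutelyContinuousOnInterval f a b)
    (F : ℝ → ℝ) (K : ℝ) (hK : 0 ≤ K)
    (h : ∀ u ∈ Set.uIcc a b, ∀ v ∈ Set.uIcc a b, |F (f u) - F (f v)| ≤ K * |f u - f v|) :
    AbsolutelyContinuousOnInterval (fun t => F (f t)) a b := by
  rw [absolutelyContinuousOnInterval_iff] at hf ⊢
  intro ε hε
  obtain ⟨δ, hδ, H⟩ := hf (ε / (K + 1)) (by positivity)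
  refine ⟨δ, hδ, fun E hE hlt => ?_⟩
  have h1 := H E hE hlt
  have h2 : ∑ i ∈ Finset.range E.1, dist (F (f (E.2 i).1)) (F (f (E.2 i).2)) ≤
      K * ∑ i ∈ Finset.range E.1, dist (f (E.2 i).1) (f (E.2 i).2) := by
    rw [Finset.mul_sum]
    refine Finset.sum_le_sum fun i hi => ?_
    rw [Real.dist_eq, Real.dist_eq]
    have := hE.1 i hi
    exact h _ this.1 _ this.2
  have h0 : 0 ≤ ∑ i ∈ Finset.range E.1, dist (f (E.2 i).1) (f (E.2 i).2) :=
    Finset.sum_nonneg fun i _ => dist_nonneg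
  rw [lt_div_iff₀ (by positivity)] at h1
  nlinarith

lemma ac_sum {ι : Type*} (s : Finset ι) {f : ι → ℝ → ℝ} {a b : ℝ}
    (hf : ∀ i ∈ s, AbsolutelyContinuousOnInterval (f i) a b) :
    AbsolutelyContinuousOnInterval (fun t => ∑ i ∈ s, f i t) a b := by
  classical
  induction s using Finset.induction_on with
  | empty =>
    simp only [Finset.sum_empty]
    exact (LipschitzWith.const (0 : ℝ)).lipschitzOnWith.absolutelyContinuousOnInterval
  | insert i s hi ih =>
    have h1 := (hf i (by simp)).add (ih fun j hj => hf j (by simp [hj]))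
    have e : (fun t => ∑ j ∈ insert i s, f j t) = f i + fun t => ∑ j ∈ s, f j t := by
      funext t
      simp [Finset.sum_insert hi]
    rw [e]
    exact h1

/-- The primitive of `g`. -/
noncomputable def prim (g : ℝ → ℝ) (z : ℝ) : ℝ := ∫ s in (0:ℝ)..z, g s

lemma prim_sub {g : ℝ → ℝ} (hg : Monotone g) (y z : ℝ) :
    prim g y - prim g z = ∫ s in z..y, g s := by
  unfold prim
  exact intervalIntegral.integral_interval_sub_left hg.intervalIntegrable hg.intervalIntegrable

lemma prim_subgrad {g : ℝ → ℝ} (hg : Monotone g) {z η : ℝ}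
    (hη : η ∈ Set.Icc (leftLim g z) (rightLim g z)) (y : ℝ) :
    η * (y - z) ≤ prim g y - prim g z := by
  rw [prim_sub hg]
  rcases le_total z y with h | h
  · have := intervalIntegral.integral_mono_on_of_le_Ioo (μ := volume) (f := fun _ => η) (g := g) h
      intervalIntegrable_const hg.intervalIntegrable
      (fun s hs => hη.2.trans (hg.rightLim_le hs.1))
    simp only [intervalIntegral.integral_const, smul_eq_mul] at this
    linarith
  · have := intervalIntegral.integral_mono_on_of_le_Ioo (μ := volume) (f := g) (g := fun _ => η) h
      hg.intervalIntegrable intervalIntegrable_const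
      (fun s hs => (hg.le_leftLim hs.2).trans hη.1)
    simp only [intervalIntegral.integral_const, smul_eq_mul] at this
    rw [intervalIntegral.integral_symm]
    linarith

lemma self_mem {g : ℝ → ℝ} (hg : Monotone g) (z : ℝ) :
    g z ∈ Set.Icc (leftLim g z) (rightLim g z) :=
  ⟨hg.leftLim_le le_rfl, hg.le_rightLim le_rfl⟩

lemma prim_comp_ac {g : ℝ → ℝ} (hg : Monotone g) {f : ℝ → ℝ} {a b : ℝ}
    (hf : AbsolutelyContinuousOnInterval f a b) :
    AbsolutelyContinuousOnInterval (fun t => prim g (f t)) a b := by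
  obtain ⟨C, hC⟩ := hf.exists_bound
  have hb : ∀ u ∈ Set.uIcc a b, |g (f u)| ≤ max |g C| |g (-C)| := by
    intro u hu
    have h1 := abs_le.1 (hC u hu)
    have h2 := hg h1.1
    have h3 := hg h1.2
    rw [abs_le]
    constructor
    · have := neg_abs_le (g (-C))
      have := le_max_right |g C| |g (-C)|
      linarith
    · have := le_abs_self (g C)
      have := le_max_left |g C| |g (-C)|
      linarith
  refine ac_comp hf (prim g) (max |g C| |g (-C)|) (le_max_of_le_left (abs_nonneg _)) ?_
  intro u hu v hv
  have h1 := prim_subgrad hg (self_mem hg (f v)) (f u)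
  have h2 := prim_subgrad hg (self_mem hg (f u)) (f v)
  have key : ∀ w ∈ Set.uIcc a b, |g (f w) * (f u - f v)| ≤
      max |g C| |g (-C)| * |f u - f v| := by
    intro w hw
    rw [abs_mul]
    exact mul_le_mul_of_nonneg_right (hb w hw) (abs_nonneg _)
  have k1 := abs_le.1 (key u hu)
  have k2 := abs_le.1 (key v hv)
  rw [abs_le]
  constructor <;> linarith

/-- Dissipation. -/
def diss {n : ℕ} (L : Matrix (Fin n) (Fin n) ℝ) (ξ c : Fin n → ℝ) : ℝ :=
  ∑ i, ∑ j, ξ i * (-L i j) * (c i - c j) ^ 2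

lemma diss_eq {n : ℕ} {L : Matrix (Fin n) (Fin n) ℝ} (hL2 : ∀ i, ∑ j, L i j = 0)
    {ξ : Fin n → ℝ} (hξ : ∀ j, ∑ i, ξ i * L i j = 0) (c : Fin n → ℝ) :
    ∑ i, ξ i * c i * (∑ j, L i j * c j) = (1 / 2) * diss L ξ c := by
  have e : diss L ξ c = -(∑ i, ∑ j, ξ i * c i ^ 2 * L i j) - (∑ i, ∑ j, (ξ i * L i j) * c j ^ 2)
      + 2 * ∑ i, ∑ j, ξ i * c i * (L i j * c j) := by
    unfold diss
    simp only [Finset.mul_sum, ← Finset.sum_neg_distrib, ← Finset.sum_sub_distrib,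
      ← Finset.sum_add_distrib]
    refine Finset.sum_congr rfl fun i _ => Finset.sum_congr rfl fun j _ => ?_
    ring
  have e1 : ∑ i, ∑ j, ξ i * c i ^ 2 * L i j = 0 := by
    simp [← Finset.mul_sum, hL2]
  have e2 : ∑ i, ∑ j, (ξ i * L i j) * c j ^ 2 = 0 := by
    rw [Finset.sum_comm]
    simp [← Finset.sum_mul, hξ]
  have e3 : ∑ i, ξ i * c i * (∑ j, L i j * c j) = ∑ i, ∑ j, ξ i * c i * (L i j * c j) := by
    simp only [Finset.mul_sum]
  rw [e, e1, e2, e3]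
  ring

section
variable {n : ℕ} {L : Matrix (Fin n) (Fin n) ℝ} (hL1 : ∀ i j, i ≠ j → L i j ≤ 0)
  {ξ : Fin n → ℝ} (hξpos : ∀ i, 0 < ξ i)

lemma diss_term_nonneg (hL1 : ∀ i j, i ≠ j → L i j ≤ 0) (hξpos : ∀ i, 0 < ξ i)
    (c : Fin n → ℝ) (i j : Fin n) : 0 ≤ ξ i * (-L i j) * (c i - c j) ^ 2 := by
  by_cases h : i = j
  · simp [h]
  · have := hL1 i j h
    have := hξpos i
    have : 0 ≤ -L i j := by linarith
    positivity

lemma diss_nonneg (hL1 : ∀ i j, i ≠ j → L i j ≤ 0) (hξpos : ∀ i, 0 < ξ i)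
    (c : Fin n → ℝ) : 0 ≤ diss L ξ c :=
  Finset.sum_nonneg fun i _ => Finset.sum_nonneg fun j _ => diss_term_nonneg hL1 hξpos c i j

lemma term_le_diss (hL1 : ∀ i j, i ≠ j → L i j ≤ 0) (hξpos : ∀ i, 0 < ξ i)
    (c : Fin n → ℝ) (i j : Fin n) : ξ i * (-L i j) * (c i - c j) ^ 2 ≤ diss L ξ c := by
  have h1 := Finset.single_le_sum (f := fun j => ξ i * (-L i j) * (c i - c j) ^ 2)
    (fun j _ => diss_term_nonneg hL1 hξpos c i j) (Finset.mem_univ j)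
  have h2 := Finset.single_le_sum (f := fun i => ∑ j, ξ i * (-L i j) * (c i - c j) ^ 2)
    (fun i _ => Finset.sum_nonneg fun j _ => diss_term_nonneg hL1 hξpos c i j) (Finset.mem_univ i)
  exact h1.trans h2

lemma path_bound (hL1 : ∀ i j, i ≠ j → L i j ≤ 0) (hξpos : ∀ i, 0 < ξ i) {u w : Fin n}
    (h : Relation.ReflTransGen (fun a b => a ≠ b ∧ L b a < 0) u w) :
    ∃ C : ℝ, 0 ≤ C ∧ ∀ c : Fin n → ℝ, (c u - c w) ^ 2 ≤ C * diss L ξ c := by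
  induction h with
  | refl => exact ⟨0, le_rfl, fun c => by simp⟩
  | @tail a b _ hab ih =>
    obtain ⟨C, hC, H⟩ := ih
    have hw : 0 < ξ b * (-L b a) := mul_pos (hξpos b) (by linarith [hab.2])
    refine ⟨2 * C + 2 / (ξ b * (-L b a)), by positivity, fun c => ?_⟩
    have h1 := H c
    have h2 := term_le_diss hL1 hξpos c b a
    have h3 : (c b - c a) ^ 2 ≤ diss L ξ c / (ξ b * (-L b a)) := by
      rw [le_div_iff₀ hw]; linarith
    have h4 : (2 * C + 2 / (ξ b * (-L b a))) * diss L ξ c =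
      2 * (C * diss L ξ c) + 2 * (diss L ξ c / (ξ b * (-L b a))) := by ring
    rw [h4]
    nlinarith [sq_nonneg (c u - c a + (c b - c a))]

lemma uniform_bound (hL1 : ∀ i j, i ≠ j → L i j ≤ 0) (hξpos : ∀ i, 0 < ξ i)
    (hsc : ∀ u w : Fin n, Relation.ReflTransGen (fun a b => a ≠ b ∧ L b a < 0) u w) :
    ∃ C : ℝ, 0 < C ∧ ∀ (u w : Fin n) (c : Fin n → ℝ), (c u - c w) ^ 2 ≤ C * diss L ξ c := by
  choose C hC H using fun u w => path_bound hL1 hξpos (hsc u w)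
  refine ⟨(∑ u, ∑ w, C u w) + 1, ?_, ?_⟩
  · have : 0 ≤ ∑ u, ∑ w, C u w := Finset.sum_nonneg fun u _ => Finset.sum_nonneg fun w _ => hC u w
    linarith
  · intro u w c
    refine (H u w c).trans (mul_le_mul_of_nonneg_right ?_ (diss_nonneg hL1 hξpos c))
    have h1 := Finset.single_le_sum (f := fun w => C u w) (fun w _ => hC u w) (Finset.mem_univ w)
    have h2 := Finset.single_le_sum (f := fun u => ∑ w, C u w)
      (fun u _ => Finset.sum_nonneg fun w _ => hC u w) (Finset.mem_univ u)
    linarith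

end

/-- If the weighted mean is `m` and the vector is not constant `m`, there is an entry on each
side. -/
lemma exists_both {n : ℕ} {ξ : Fin n → ℝ} (hξpos : ∀ i, 0 < ξ i) {y : Fin n → ℝ} {m : ℝ}
    (h0 : ∑ i, ξ i * (y i - m) = 0) (hne : ∃ i, y i ≠ m) : (∃ i, y i < m) ∧ ∃ j, m < y j := by
  obtain ⟨k, hk⟩ := hne
  constructor
  · by_contra! hcon
    have := (Finset.sum_eq_zero_iff_of_nonneg (fun i _ =>
      mul_nonneg (hξpos i).le (sub_nonneg.2 (hcon i)))).1 h0 k (Finset.mem_univ k)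
    rcases mul_eq_zero.1 this with h | h
    · exact (hξpos k).ne' h
    · exact hk (by linarith)
  · by_contra! hcon
    have h0' : ∑ i, ξ i * (m - y i) = 0 := by
      rw [← neg_eq_zero, ← Finset.sum_neg_distrib, ← h0]
      exact Finset.sum_congr rfl fun i _ => by ring
    have := (Finset.sum_eq_zero_iff_of_nonneg (fun i _ =>
      mul_nonneg (hξpos i).le (sub_nonneg.2 (hcon i)))).1 h0' k (Finset.mem_univ k)
    rcases mul_eq_zero.1 this with h | h
    · exact (hξpos k).ne' h
    · exact hk (by linarith)

/-- Decay of the Lyapunov function along a solution. -/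
lemma decay {n : ℕ} {L : Matrix (Fin n) (Fin n) ℝ} (hL2 : ∀ i, ∑ j, L i j = 0)
    {ξ : Fin n → ℝ} (hξpos : ∀ i, 0 < ξ i) (hξ : ∀ j, ∑ i, ξ i * L i j = 0)
    {g : ℝ → ℝ} (hg : Monotone g) {y γ : ℝ → Fin n → ℝ} {x0 : Fin n → ℝ}
    (hint : ∀ i, LocallyIntegrable (fun s => ∑ j, L i j * γ s j) volume)
    (hy : ∀ t i, y t i = x0 i - ∫ s in (0:ℝ)..t, ∑ j, L i j * γ s j)
    {s t k : ℝ} (hs : 0 ≤ s) (hst : s ≤ t)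
    (hγK : ∀ᵐ r ∂volume, 0 ≤ r →
      ∀ j, γ r j ∈ Set.Icc (leftLim g (y r j)) (rightLim g (y r j)))
    (hk : ∀ᵐ r ∂volume, r ∈ Set.Ioo s t → 2 * k ≤ diss L ξ (γ r)) :
    ∑ i, ξ i * prim g (y t i) ≤ ∑ i, ξ i * prim g (y s i) - k * (t - s) := by
  have hint' : ∀ i a b, IntervalIntegrable (fun s => ∑ j, L i j * γ s j) volume a b :=
    fun i a b => intervalIntegrable_iff.mpr <|
      ((hint i).integrableOn_isCompact isCompact_uIcc).mono_set Set.uIoc_subset_uIcc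
  have hyac : ∀ i, AbsolutelyContinuousOnInterval (fun r => y r i) s t := by
    intro i
    have h1 := (hint' i 0 t).absolutelyContinuousOnInterval_intervalIntegral (c := 0) (by simp)
    have h2 := h1.mono (c := s) (d := t)
      (by rw [Set.uIcc_of_le hst, Set.uIcc_of_le (hs.trans hst)]; exact Set.Icc_subset_Icc_left hs)
    have h3 : AbsolutelyContinuousOnInterval (fun _ : ℝ => x0 i) s t :=
      (LipschitzWith.const (x0 i)).lipschitzOnWith.absolutelyContinuousOnInterval
    have e : (fun r => y r i) = (fun _ : ℝ => x0 i) -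
        fun r => ∫ v in (0:ℝ)..r, ∑ j, L i j * γ v j := by
      funext r
      simp [hy]
    rw [e]
    exact h3.sub h2
  set V : ℝ → ℝ := fun r => ∑ i, ξ i * prim g (y r i) with hV
  have hVac : AbsolutelyContinuousOnInterval V s t :=
    ac_sum _ fun i _ => (prim_comp_ac hg (hyac i)).const_mul (ξ i)
  have hder : ∀ᵐ r ∂volume, ∀ i, HasDerivAt (fun r => y r i) (-∑ j, L i j * γ r j) r := by
    rw [ae_all_iff]
    intro i
    filter_upwards [_root_.LocallyIntegrable.ae_hasDerivAt_integral (hint i)] with r hr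
    have := (hr 0).const_sub (x0 i)
    simpa only [hy] using this
  have hs' : ∀ᵐ r : ℝ, r ≠ s := by simp [ae_iff, measure_singleton]
  have ht' : ∀ᵐ r : ℝ, r ≠ t := by simp [ae_iff, measure_singleton]
  have hle : deriv V ≤ᵐ[volume.restrict (Set.Icc s t)] fun _ => -k := by
    rw [EventuallyLE, ae_restrict_iff' measurableSet_Icc]
    filter_upwards [hder, hs', ht', hVac.ae_differentiableAt, hγK, hk]
      with r hr h1 h2 h3 h4 h5 hmem
    have hr0 : 0 ≤ r := hs.trans hmem.1
    have h4 := h4 hr0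
    have h5 := h5 ⟨lt_of_le_of_ne hmem.1 (Ne.symm h1), lt_of_le_of_ne hmem.2 h2⟩
    have h3 := (h3 (by rwa [Set.uIcc_of_le hst])).hasDerivAt
    have hlin : HasDerivAt (fun q => ∑ i, ξ i * γ r i * y q i)
        (∑ i, ξ i * γ r i * (-∑ j, L i j * γ r j)) r :=
      HasDerivAt.fun_sum fun i _ => (hr i).const_mul _
    have hmin : IsLocalMin (fun q => V q - ∑ i, ξ i * γ r i * y q i) r := by
      refine Eventually.of_forall fun q => ?_
      have : ∑ i, (ξ i * γ r i * y q i - ξ i * γ r i * y r i) ≤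
          ∑ i, (ξ i * prim g (y q i) - ξ i * prim g (y r i)) := by
        refine Finset.sum_le_sum fun i _ => ?_
        have := mul_le_mul_of_nonneg_left (prim_subgrad hg (h4 i) (y q i)) (hξpos i).le
        linarith
      simp only [Finset.sum_sub_distrib] at this
      simp only [hV]
      linarith
    have hz := hmin.hasDerivAt_eq_zero (h3.sub hlin)
    have hd := diss_eq hL2 hξ (γ r)
    have : ∑ i, ξ i * γ r i * (-∑ j, L i j * γ r j) = -((1 / 2) * diss L ξ (γ r)) := by
      rw [← hd, ← Finset.sum_neg_distrib]
      exact Finset.sum_congr rfl fun i _ => by ring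
    linarith
  have hfin := intervalIntegral.integral_mono_ae_restrict hst hVac.intervalIntegrable_deriv
    intervalIntegrable_const hle
  rw [hVac.integral_deriv_eq_sub, intervalIntegral.integral_const, smul_eq_mul] at hfin
  linarith

end Consensus

open Consensus

/-- finite-time convergence part of Theorem 1: If `G(L)` is strongly
connected, `ξ` is a normalized positive left null vector of `L`, `g` is strictly
increasing with only finitely many discontinuity points in every bounded interval,
and `g` is discontinuous at `x̄ = ∑ i, ξ i * x0 i`, then every Filippov solution with
initial value `x0` reaches consensus at `x̄` in finite time. -/
theorem finite_time_consensus_of_discontinuity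
    (n : ℕ) (L : Matrix (Fin n) (Fin n) ℝ)
    (hL1 : ∀ i j, i ≠ j → L i j ≤ 0) (hL2 : ∀ i, ∑ j, L i j = 0)
    (hsc : ∀ u w : Fin n,
      Relation.ReflTransGen (fun a b => a ≠ b ∧ L b a < 0) u w)
    (ξ : Fin n → ℝ) (hξpos : ∀ i, 0 < ξ i) (hξ1 : ∑ i, ξ i = 1)
    (hξ : ∀ j, ∑ i, ξ i * L i j = 0)
    (g : ℝ → ℝ) (hg : StrictMono g)
    (hgfin : ∀ a b : ℝ, {z : ℝ | z ∈ Set.Icc a b ∧ ¬ ContinuousAt g z}.Finite)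
    (x0 : Fin n → ℝ)
    (hdisc : leftLim g (∑ i, ξ i * x0 i) < rightLim g (∑ i, ξ i * x0 i))
    (x γ : ℝ → Fin n → ℝ)
    (hxcont : Continuous x) (hγmeas : Measurable γ)
    (hγint : LocallyIntegrable γ volume)
    (hγK : ∀ᵐ t ∂volume, 0 ≤ t →
      ∀ j, γ t j ∈ Set.Icc (leftLim g (x t j)) (rightLim g (x t j)))
    (hsol : ∀ t, 0 ≤ t → ∀ i,
      x t i = x0 i - ∫ s in (0:ℝ)..t, ∑ j, L i j * γ s j) :
    ∃ T : ℝ, 0 ≤ T ∧ ∀ t, T ≤ t → ∀ i, x t i = ∑ i, ξ i * x0 i := by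
  set m := ∑ i, ξ i * x0 i with hm
  have hgm : Monotone g := hg.monotone
  have hint : ∀ i, LocallyIntegrable (fun s => ∑ j, L i j * γ s j) volume := by
    intro i
    have hj : ∀ j, LocallyIntegrable (fun s => γ s j) volume := by
      intro j
      intro r
      obtain ⟨U, hU, hi⟩ := hγint r
      exact ⟨U, hU, Integrable.eval hi j⟩
    exact locallyIntegrable_finsetSum _ fun j _ => (hj j).smul (L i j)
  have hint' : ∀ i a b, IntervalIntegrable (fun s => ∑ j, L i j * γ s j) volume a b :=
    fun i a b => intervalIntegrable_iff.mpr <|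
      ((hint i).integrableOn_isCompact isCompact_uIcc).mono_set Set.uIoc_subset_uIcc
  obtain ⟨y, hy⟩ : ∃ y : ℝ → Fin n → ℝ,
      ∀ t i, y t i = x0 i - ∫ s in (0:ℝ)..t, ∑ j, L i j * γ s j := ⟨fun t i => _, fun t i => rfl⟩
  have hxy : ∀ t, 0 ≤ t → x t = y t := fun t ht => by
    funext i; rw [hsol t ht i, hy]
  have hγK' : ∀ᵐ r ∂volume, 0 ≤ r →
      ∀ j, γ r j ∈ Set.Icc (leftLim g (y r j)) (rightLim g (y r j)) := by
    filter_upwards [hγK] with r hr h0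
    rw [← hxy r h0]
    exact hr h0
  have hmean : ∀ t, ∑ i, ξ i * (y t i - m) = 0 := by
    intro t
    have e1 : ∑ i, ξ i * (y t i - m) = (∑ i, ξ i * x0 i) - (∑ i, ξ i) * m -
        ∑ i, ∫ s in (0:ℝ)..t, ξ i * ∑ j, L i j * γ s j := by
      simp only [intervalIntegral.integral_const_mul, Finset.sum_mul, ← Finset.sum_sub_distrib]
      refine Finset.sum_congr rfl fun i _ => ?_
      rw [hy]; ring
    have e2 : ∑ i, ∫ s in (0:ℝ)..t, ξ i * ∑ j, L i j * γ s j = 0 := by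
      rw [← intervalIntegral.integral_finsetSum fun i _ => (hint' i 0 t).const_mul (ξ i)]
      have : ∀ s, ∑ i, ξ i * ∑ j, L i j * γ s j = 0 := by
        intro s
        simp only [Finset.mul_sum]
        rw [Finset.sum_comm]
        simp only [← mul_assoc, ← Finset.sum_mul, hξ]
        simp
      simp [this]
    rw [e1, e2, hξ1, ← hm]; ring
  set V : ℝ → ℝ := fun r => ∑ i, ξ i * prim g (y r i) with hV
  have hVlow : ∀ t, prim g m ≤ V t := by
    intro t
    have h1 : ∑ i, ξ i * (g m * (y t i - m)) ≤ ∑ i, ξ i * (prim g (y t i) - prim g m) :=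
      Finset.sum_le_sum fun i _ =>
        mul_le_mul_of_nonneg_left (prim_subgrad hgm (self_mem hgm m) (y t i)) (hξpos i).le
    have h2 : ∑ i, ξ i * (g m * (y t i - m)) = g m * ∑ i, ξ i * (y t i - m) := by
      rw [Finset.mul_sum]; exact Finset.sum_congr rfl fun i _ => by ring
    have h3 : ∑ i, ξ i * (prim g (y t i) - prim g m) = V t - (∑ i, ξ i) * prim g m := by
      simp only [hV, Finset.sum_mul, ← Finset.sum_sub_distrib]
      exact Finset.sum_congr rfl fun i _ => by ring
    rw [h2, hmean, h3, hξ1] at h1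
    linarith
  obtain ⟨C, hC, hCb⟩ := uniform_bound hL1 hξpos hsc
  set d := rightLim g m - leftLim g m with hd
  have hd0 : 0 < d := by rw [hd]; linarith
  obtain ⟨k, hk0, hk⟩ : ∃ k : ℝ, 0 < k ∧ 2 * k = d ^ 2 / C :=
    ⟨d ^ 2 / C / 2, by positivity, by ring⟩
  have hdec : ∀ s t, 0 ≤ s → s ≤ t → (∀ r ∈ Set.Ioo s t, ∃ i, y r i ≠ m) →
      V t ≤ V s - k * (t - s) := by
    intro s t hs hst hne
    refine decay hL2 hξpos hξ hgm hint hy hs hst hγK' ?_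
    filter_upwards [hγK'] with r hr hmem
    have hr := hr (hs.trans hmem.1.le)
    obtain ⟨⟨i, hi⟩, ⟨j, hj⟩⟩ := exists_both hξpos (hmean r) (hne r hmem)
    have h1 := (hr i).2.trans (hgm.rightLim_le_leftLim hi)
    have h2 := (hgm.rightLim_le_leftLim hj).trans (hr j).1
    have h3 : d ≤ γ r j - γ r i := by rw [hd]; linarith
    have h4 := hCb j i (γ r)
    rw [hk, div_le_iff₀ hC]
    nlinarith
  -- consensus is reached at some time
  obtain ⟨t0, ht0, hcons⟩ : ∃ t0, 0 ≤ t0 ∧ ∀ i, y t0 i = m := by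
    by_contra! hcon
    set T := (V 0 - prim g m + 1) / k with hT
    have hT0 : 0 ≤ T := by
      have := hVlow 0
      apply div_nonneg _ hk0.le
      linarith
    have h1 := hdec 0 T le_rfl hT0 fun r hr => hcon r hr.1.le
    have h2 := hVlow T
    have h3 : k * (T - 0) = V 0 - prim g m + 1 := by rw [hT]; field_simp; ring
    linarith
  refine ⟨t0, ht0, fun t ht => ?_⟩
  by_contra hcon
  have hVm : ∀ r, (∀ i, y r i = m) → V r = prim g m := by
    intro r hr
    simp only [hV, hr, ← Finset.sum_mul, hξ1, one_mul]
  have hclosed : IsClosed {r : ℝ | x r = fun _ => m} := isClosed_eq hxcont continuous_const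
  have hcpt : IsCompact (Set.Icc t0 t ∩ {r : ℝ | x r = fun _ => m}) :=
    isCompact_Icc.inter_right hclosed
  obtain ⟨s, ⟨hsI, hsm⟩, hsmax⟩ := hcpt.exists_isGreatest
    ⟨t0, ⟨le_rfl, ht⟩, by
      change x t0 = fun _ => m
      rw [hxy t0 ht0]; funext i; exact hcons i⟩
  have hs0 : 0 ≤ s := ht0.trans hsI.1
  have hsm' : ∀ i, y s i = m := fun i => by
    rw [← hxy s hs0]; exact congrFun hsm i
  have hstlt : s < t := by
    refine lt_of_le_of_ne hsI.2 fun h => hcon fun i => ?_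
    rw [← h]; exact congrFun hsm i
  have h1 := hdec s t hs0 hstlt.le fun r hr => by
    by_contra! hall
    have hr0 : 0 ≤ r := hs0.trans hr.1.le
    have : r ≤ s := hsmax ⟨⟨hsI.1.trans hr.1.le, hr.2.le⟩, by
      change x r = fun _ => m
      rw [hxy r hr0]; funext i; exact hall i⟩
    exact absurd hr.1 (not_lt.2 this)
  rw [hVm s hsm'] at h1
  have h2 := hVlow t
  have h3 : 0 < k * (t - s) := mul_pos hk0 (sub_pos.2 hstlt)
  linarith
end

section
/- Let L be a graph Laplacian such that G(L) is strongly connected, and let ξ : Fin n → ℝ satisfy ξ i > 0 for all i and ∑ i, ξ i * L i j = 0 for every j. Then the symmetric matrix Ξ L + Lᵀ Ξ, where Ξ = diagonal matrix of ξ, is positive semidefinite: for every v : Fin n → ℝ, ∑ i, ∑ j, (ξ i * L i j + ξ j * L j i) * v i * v j ≥ 0, and equality holds if and only if v is constant (v i = v j for all i, j). -/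
/-- If `G(L)` is strongly connected and `ξ` is a positive left null
vector of `L`, then `Ξ L + Lᵀ Ξ` is positive semidefinite, with the quadratic form
vanishing exactly on constant vectors. -/
theorem xiL_plus_LtXi_posSemidef
    (n : ℕ) (L : Matrix (Fin n) (Fin n) ℝ)
    (hL1 : ∀ i j, i ≠ j → L i j ≤ 0) (hL2 : ∀ i, ∑ j, L i j = 0)
    (hsc : ∀ u w : Fin n,
      Relation.ReflTransGen (fun a b => a ≠ b ∧ L b a < 0) u w)
    (ξ : Fin n → ℝ) (hξpos : ∀ i, 0 < ξ i)
    (hξ : ∀ j, ∑ i, ξ i * L i j = 0) :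
    ∀ v : Fin n → ℝ,
      0 ≤ ∑ i, ∑ j, (ξ i * L i j + ξ j * L j i) * v i * v j ∧
      ((∑ i, ∑ j, (ξ i * L i j + ξ j * L j i) * v i * v j) = 0 ↔ ∀ i j, v i = v j) := by
  intro v
  have h1 : ∑ i, ∑ j, ξ i * L i j * v i ^ 2 = 0 := by
    apply Finset.sum_eq_zero
    intro i _
    have : ∑ j, ξ i * L i j * v i ^ 2 = ξ i * v i ^ 2 * ∑ j, L i j := by
      rw [Finset.mul_sum]
      exact Finset.sum_congr rfl fun j _ => by ring
    rw [this, hL2, mul_zero]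
  have h2 : ∑ i, ∑ j, ξ i * L i j * v j ^ 2 = 0 := by
    rw [Finset.sum_comm]
    apply Finset.sum_eq_zero
    intro j _
    rw [← Finset.sum_mul, hξ, zero_mul]
  have h3 : ∑ i, ∑ j, ξ j * L j i * v i * v j = ∑ i, ∑ j, ξ i * L i j * v i * v j := by
    rw [Finset.sum_comm]
    exact Finset.sum_congr rfl fun i _ => Finset.sum_congr rfl fun j _ => by ring
  have key : ∑ i, ∑ j, (ξ i * L i j + ξ j * L j i) * v i * v j
      = ∑ i, ∑ j, -(ξ i * L i j) * (v i - v j) ^ 2 := by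
    have e1 : ∑ i, ∑ j, (ξ i * L i j + ξ j * L j i) * v i * v j
        = ∑ i, ∑ j, ξ i * L i j * v i * v j + ∑ i, ∑ j, ξ j * L j i * v i * v j := by
      simp only [← Finset.sum_add_distrib]
      exact Finset.sum_congr rfl fun i _ => Finset.sum_congr rfl fun j _ => by ring
    have e2 : ∑ i, ∑ j, -(ξ i * L i j) * (v i - v j) ^ 2
        = ∑ i, ∑ j, ξ i * L i j * v i * v j + ∑ i, ∑ j, ξ i * L i j * v i * v j
          - ∑ i, ∑ j, ξ i * L i j * v i ^ 2 - ∑ i, ∑ j, ξ i * L i j * v j ^ 2 := by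
      simp only [← Finset.sum_add_distrib, ← Finset.sum_sub_distrib]
      exact Finset.sum_congr rfl fun i _ => Finset.sum_congr rfl fun j _ => by ring
    rw [e1, e2, h1, h2, h3]
    ring
  have hnn : ∀ i j, 0 ≤ -(ξ i * L i j) * (v i - v j) ^ 2 := by
    intro i j
    by_cases hij : i = j
    · subst hij
      simp
    · have := mul_nonneg (hξpos i).le (neg_nonneg.mpr (hL1 i j hij))
      apply mul_nonneg _ (sq_nonneg _)
      linarith
  rw [key]
  refine ⟨Finset.sum_nonneg fun i _ => Finset.sum_nonneg fun j _ => hnn i j, ?_, ?_⟩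
  · intro h
    have hz : ∀ i j, -(ξ i * L i j) * (v i - v j) ^ 2 = 0 := by
      intro i j
      have hi := (Finset.sum_eq_zero_iff_of_nonneg
        (fun i _ => Finset.sum_nonneg fun j _ => hnn i j)).1 h i (Finset.mem_univ i)
      exact (Finset.sum_eq_zero_iff_of_nonneg (fun j _ => hnn i j)).1 hi j (Finset.mem_univ j)
    intro i j
    induction hsc i j with
    | refl => rfl
    | tail hab hbc ih =>
      rename_i b c
      rw [ih]
      rcases mul_eq_zero.1 (hz c b) with h0 | h0
      · have := mul_pos (hξpos c) (neg_pos.mpr hbc.2)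
        linarith
      · have := pow_eq_zero_iff (two_ne_zero) |>.1 h0
        linarith
  · intro h
    apply Finset.sum_eq_zero
    intro i _
    apply Finset.sum_eq_zero
    intro j _
    rw [h i j]
    simp
end
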